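/- Let d ≥ 3, s > d/2 an integer. There exists a function 𝒞 such that for all φ ∈ H^{s+1}(ℝᵈ) and all vector fields v ∈ H^{s+1}(ℝᵈ), ‖∇v‖_{H^s} ≤ C(‖div(e^φ v)‖_{H^s} + ‖curl v‖_{H^s}) where C = (1+‖φ‖_{H^{s+1}}) 𝒞(‖φ‖_{H^s}, ‖∇φ‖_{L∞}). -/

import Mathlib

open MeasureTheory SchwartzMap
open scoped FourierTransform Real

noncomputable section

abbrev Euc (d : ℕ) := EuclideanSpace ℝ (Fin d)

/-- Square of the `H^s` norm via the Fourier transform. -/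
def hNormSq (d : ℕ) (s : ℝ) (u : Euc d → ℂ) : ℝ :=
  ∫ ξ : Euc d, (1 + ‖ξ‖ ^ 2) ^ s * ‖𝓕 u ξ‖ ^ 2

def hNorm (d : ℕ) (s : ℝ) (u : Euc d → ℂ) : ℝ := Real.sqrt (hNormSq d s u)

/-- `i`-th partial derivative. -/
def pd (d : ℕ) (i : Fin d) (u : Euc d → ℂ) : Euc d → ℂ :=
  fun x => fderiv ℝ u x (EuclideanSpace.single i 1)

/-- `H^s` norm of the full gradient of a scalar function. -/
def gradHNorm (d : ℕ) (s : ℝ) (u : Euc d → ℂ) : ℝ :=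
  Real.sqrt (∑ i, hNormSq d s (pd d i u))

/-!
Write `e^φ = 1 + m`, and let `V`, `M` be the Fourier transforms of `v` and `m v`. With `Pξ` the
orthogonal projection onto `ℂ ξ`, decompose `V = W + Z`, where `Z(ξ) = -Pξ M(ξ)`. Up to the factor
`2πi`, the vector `W(ξ)` has the same exterior product with `ξ` as `V(ξ)`, namely the transform of
`curl v`, and `ξ · W(ξ) = ξ · (V + M)(ξ)` is the transform of `div (e^φ v)`. By Lagrange's identity
`W` is therefore exactly the quantity controlled by the right-hand side, and `Z` must be bounded by
`W`.

Since `V + M` transforms `e^φ v`, orthogonality of `Pξ` makes `Z(ξ)` orthogonal to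
`(Z + m̂ ∗ (Z + W))(ξ)` at every frequency. As `1 + m = e^φ` is bounded below, this is an elliptic
equation for `Z` with source `W`. An energy estimate with the weight `⟨ξ⟩ᵗ`, whose commutator with
`m̂ ∗` has order `t - ε` and is absorbed by interpolation, bounds `Z` in `L²`, then in `Hˢ`, and
then in `Hˢ⁺¹`, the last with a constant linear in `‖m‖_{Hˢ⁺¹}`. For `d ≥ 3` the weight
`|ξ|⁻¹ ⟨ξ⟩⁻ˢ` is square integrable, so the `L¹` norm of `W` is controlled by the `L²` norm of
`|ξ| ⟨ξ⟩ˢ W` and no lower order norm of the source is needed. Finally `∇m = (1 + m) ∇φ` bounds the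
Sobolev norms of `m` by those of `φ`.
-/

open scoped ENNReal NNReal LineDeriv

section RealPowers

theorem mul_rpow_add_le {p q t ε : ℝ} (hp : 0 < p) (hq : 0 < q) (ht : 1 ≤ t) (hε : ε ≤ 1) :
    p * (p + q) ^ (t - 1) ≤ 2 ^ (t - 1) * (p ^ t + p ^ ε * q ^ (t - ε)) := by
  have : 0 ≤ t - 1 := by linarith
  rcases le_total q p with hqp | hpq
  · calc p * (p + q) ^ (t - 1) ≤ p * (2 * p) ^ (t - 1) := by gcongr; linarith
      _ = 2 ^ (t - 1) * p ^ t := by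
        rw [Real.mul_rpow two_pos.le hp.le, mul_left_comm, ← Real.rpow_one_add' hp.le (by linarith),
          add_sub_cancel]
      _ ≤ _ := by gcongr; exact le_add_of_nonneg_right (by positivity)
  · calc p * (p + q) ^ (t - 1) = p ^ ε * p ^ (1 - ε) * (p + q) ^ (t - 1) := by
          rw [← Real.rpow_add hp, add_sub_cancel, Real.rpow_one]
      _ ≤ p ^ ε * q ^ (1 - ε) * (2 * q) ^ (t - 1) := by
        have : p ^ (1 - ε) ≤ q ^ (1 - ε) := Real.rpow_le_rpow hp.le hpq (by linarith)
        gcongr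
        linarith
      _ = 2 ^ (t - 1) * (p ^ ε * q ^ (t - ε)) := by
        rw [Real.mul_rpow two_pos.le hq.le, ← sub_add_sub_cancel' 1 ε t, Real.rpow_add hq]
        ring
      _ ≤ _ := by gcongr; exact le_add_of_nonneg_left (by positivity)

theorem abs_rpow_sub_rpow_le {x y z t : ℝ} (hx : x ∈ Set.Icc 0 z) (hy : y ∈ Set.Icc 0 z)
    (ht : 1 ≤ t) : |x ^ t - y ^ t| ≤ t * z ^ (t - 1) * |x - y| := by
  refine (convex_Icc 0 z).norm_image_sub_le_of_norm_hasDerivWithin_le (f := fun u => u ^ t)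
    (fun u _ => (Real.hasDerivAt_rpow_const (.inr ht)).hasDerivWithinAt) (fun u hu => ?_) hy hx
  rw [Real.norm_of_nonneg (mul_nonneg (by linarith) (Real.rpow_nonneg hu.1 _))]
  gcongr
  · exact hu.1
  · exact hu.2

end RealPowers

section JapaneseBracket

variable {E : Type*} [SeminormedAddCommGroup E]

/-- The Japanese bracket `⟨ξ⟩ = (1 + |ξ|²)^{1/2}`, the frequency weight of the Sobolev spaces. -/
def japaneseBracket (ξ : E) : ℝ := √(1 + ‖ξ‖ ^ 2)

theorem japaneseBracket_sq (ξ : E) : japaneseBracket ξ ^ 2 = 1 + ‖ξ‖ ^ 2 :=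
  Real.sq_sqrt (by positivity)

theorem one_le_japaneseBracket (ξ : E) : 1 ≤ japaneseBracket ξ :=
  Real.one_le_sqrt.2 (le_add_of_nonneg_right (sq_nonneg _))

theorem japaneseBracket_pos (ξ : E) : 0 < japaneseBracket ξ :=
  one_pos.trans_le (one_le_japaneseBracket ξ)

theorem norm_le_japaneseBracket (ξ : E) : ‖ξ‖ ≤ japaneseBracket ξ :=
  Real.le_sqrt_of_sq_le (le_add_of_nonneg_left zero_le_one)

theorem continuous_japaneseBracket : Continuous (japaneseBracket : E → ℝ) := by
  unfold japaneseBracket; fun_prop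

theorem abs_japaneseBracket_sub_le (ξ η : E) :
    |japaneseBracket ξ - japaneseBracket η| ≤ ‖ξ - η‖ := by
  have hnorm : ∀ ζ : E, japaneseBracket ζ = ‖WithLp.toLp 2 ((1 : ℝ), ζ)‖ := fun ζ => by
    simp [japaneseBracket, WithLp.prod_norm_eq_of_L2]
  rw [hnorm, hnorm]
  refine (abs_norm_sub_norm_le _ _).trans_eq ?_
  rw [← WithLp.toLp_sub, WithLp.prod_norm_eq_of_L2]
  simp

theorem japaneseBracket_le_norm_sub_add (ξ η : E) :
    japaneseBracket ξ ≤ ‖ξ - η‖ + japaneseBracket η := by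
  have := (abs_le.1 (abs_japaneseBracket_sub_le ξ η)).2
  linarith

theorem japaneseBracket_le_sub_add (ξ η : E) :
    japaneseBracket ξ ≤ japaneseBracket (ξ - η) + japaneseBracket η :=
  (japaneseBracket_le_norm_sub_add ξ η).trans (by gcongr; exact norm_le_japaneseBracket _)

theorem abs_japaneseBracket_rpow_sub_le {t ε : ℝ} (ht : 1 ≤ t) (hε : ε ≤ 1) (ξ η : E) :
    |japaneseBracket ξ ^ t - japaneseBracket η ^ t| ≤
      t * 2 ^ (t - 1) * (japaneseBracket (ξ - η) ^ t +
        japaneseBracket (ξ - η) ^ ε * japaneseBracket η ^ (t - ε)) := by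
  have hp := japaneseBracket_pos (ξ - η)
  have hq := japaneseBracket_pos η
  calc _ ≤ t * (japaneseBracket (ξ - η) + japaneseBracket η) ^ (t - 1) *
        |japaneseBracket ξ - japaneseBracket η| :=
        abs_rpow_sub_rpow_le ⟨(japaneseBracket_pos ξ).le, japaneseBracket_le_sub_add ξ η⟩
          ⟨hq.le, le_add_of_nonneg_left hp.le⟩ ht
    _ ≤ t * (japaneseBracket (ξ - η) + japaneseBracket η) ^ (t - 1) * japaneseBracket (ξ - η) := by
        gcongr
        exact (abs_japaneseBracket_sub_le ξ η).trans (norm_le_japaneseBracket _)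
    _ = t * (japaneseBracket (ξ - η) *
        (japaneseBracket (ξ - η) + japaneseBracket η) ^ (t - 1)) := by
        ring
    _ ≤ _ := by
        rw [mul_assoc]
        exact mul_le_mul_of_nonneg_left (mul_rpow_add_le hp hq ht hε) (by linarith)

theorem norm_sub_mul_japaneseBracket_rpow_le {t ε : ℝ} (ht : 1 ≤ t) (hε : ε ≤ 1) (ξ η : E) :
    ‖ξ - η‖ * japaneseBracket ξ ^ (t - 1) ≤
      2 ^ (t - 1) * (japaneseBracket (ξ - η) ^ t +
        japaneseBracket (ξ - η) ^ ε * japaneseBracket η ^ (t - ε)) := by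
  have hp := japaneseBracket_pos (ξ - η)
  have : 0 ≤ t - 1 := by linarith
  refine le_trans ?_ (mul_rpow_add_le hp (japaneseBracket_pos η) ht hε)
  gcongr
  · exact Real.rpow_nonneg (japaneseBracket_pos ξ).le _
  · exact norm_le_japaneseBracket _
  · exact (japaneseBracket_pos ξ).le
  · exact japaneseBracket_le_sub_add ξ η

theorem japaneseBracket_rpow_le {t : ℝ} (ht : 1 ≤ t) (ξ η : E) :
    japaneseBracket ξ ^ t ≤
      2 ^ t * (japaneseBracket (ξ - η) ^ t + ‖η‖ * japaneseBracket η ^ (t - 1)) := by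
  have hp := japaneseBracket_pos (ξ - η)
  have hq := japaneseBracket_pos η
  have hξ : japaneseBracket ξ ≤ ‖η‖ + japaneseBracket (ξ - η) := by
    simpa using japaneseBracket_le_norm_sub_add ξ (ξ - η)
  have hη : ‖η‖ ^ t ≤ ‖η‖ * japaneseBracket η ^ (t - 1) := by
    rw [← add_sub_cancel 1 t, Real.rpow_one_add' (norm_nonneg η) (by linarith), add_sub_cancel]
    have : 0 ≤ t - 1 := by linarith
    gcongr
    exact norm_le_japaneseBracket η
  calc japaneseBracket ξ ^ t ≤ (2 * max (japaneseBracket (ξ - η)) ‖η‖) ^ t := by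
        gcongr
        · exact (japaneseBracket_pos ξ).le
        · linarith [le_max_left (japaneseBracket (ξ - η)) ‖η‖,
            le_max_right (japaneseBracket (ξ - η)) ‖η‖]
    _ = 2 ^ t * max (japaneseBracket (ξ - η)) ‖η‖ ^ t :=
        Real.mul_rpow two_pos.le (hp.le.trans (le_max_left _ _))
    _ ≤ _ := by
        gcongr
        rcases max_choice (japaneseBracket (ξ - η)) ‖η‖ with h | h <;> rw [h]
        · exact le_add_of_nonneg_right (by positivity)
        · exact hη.trans (le_add_of_nonneg_left (by positivity))

theorem japaneseBracket_rpow_sub_le {t ε κ : ℝ} (hε : 0 < ε) (hεt : ε ≤ t) (hκ : 0 < κ) (ξ : E) :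
    japaneseBracket ξ ^ (t - ε) ≤ κ * japaneseBracket ξ ^ t + (κ⁻¹ ^ ε⁻¹) ^ (t - ε) := by
  have hp := japaneseBracket_pos ξ
  rcases le_total κ⁻¹ (japaneseBracket ξ ^ ε) with h | h
  · refine le_add_of_le_of_nonneg ?_ (by positivity)
    calc japaneseBracket ξ ^ (t - ε) = κ * (κ⁻¹ * japaneseBracket ξ ^ (t - ε)) := by
          rw [mul_inv_cancel_left₀ hκ.ne']
      _ ≤ κ * (japaneseBracket ξ ^ ε * japaneseBracket ξ ^ (t - ε)) := by gcongr
      _ = κ * japaneseBracket ξ ^ t := by rw [← Real.rpow_add hp, add_sub_cancel]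
  · refine le_add_of_nonneg_of_le (by positivity) ?_
    have hbound : japaneseBracket ξ ≤ κ⁻¹ ^ ε⁻¹ := by
      rw [← Real.rpow_rpow_inv hp.le hε.ne']
      gcongr
    gcongr

end JapaneseBracket

section L2Estimates

variable {α : Type*} [MeasurableSpace α] {μ : Measure α}

theorem eLpNorm_two_sq_eq_lintegral {ε : Type*} [ENorm ε] (f : α → ε) :
    eLpNorm f 2 μ ^ 2 = ∫⁻ x, ‖f x‖ₑ ^ 2 ∂μ := by
  have := eLpNorm_nnreal_pow_eq_lintegral (μ := μ) (f := f) (p := 2) two_ne_zero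
  simpa [ENNReal.rpow_two] using this

theorem integral_norm_sq_eq {F : Type*} [NormedAddCommGroup F] {f : α → F}
    (hf : AEStronglyMeasurable f μ) : ∫ x, ‖f x‖ ^ 2 ∂μ = (eLpNorm f 2 μ ^ 2).toReal := by
  rw [integral_eq_lintegral_of_nonneg_ae (.of_forall fun x => sq_nonneg _) (hf.norm.pow 2),
    eLpNorm_two_sq_eq_lintegral]
  simp only [ENNReal.ofReal_pow (norm_nonneg _), ofReal_norm]

theorem lintegral_mul_le_eLpNorm_two_mul {f g : α → ℝ≥0∞} (hf : AEMeasurable f μ)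
    (hg : AEMeasurable g μ) : ∫⁻ x, f x * g x ∂μ ≤ eLpNorm f 2 μ * eLpNorm g 2 μ := by
  simpa [eLpNorm_eq_lintegral_rpow_enorm_toReal] using
    ENNReal.lintegral_mul_le_Lp_mul_Lq μ Real.HolderConjugate.two_two hf hg

theorem eLpNorm_le_mul_add_mul {p : ℝ≥0∞} (hp : 1 ≤ p) {f g h : α → ℝ≥0∞} (hf : AEMeasurable f μ)
    (hg : AEMeasurable g μ) {a b : ℝ≥0∞} (hle : ∀ x, h x ≤ a * f x + b * g x) :
    eLpNorm h p μ ≤ a * eLpNorm f p μ + b * eLpNorm g p μ := calc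
  _ ≤ eLpNorm ((fun x => a * f x) + fun x => b * g x) p μ := eLpNorm_mono_enorm hle
  _ ≤ eLpNorm (fun x => a * f x) p μ + eLpNorm (fun x => b * g x) p μ :=
      eLpNorm_add_le (hf.const_mul a).aestronglyMeasurable (hg.const_mul b).aestronglyMeasurable hp
  _ ≤ _ := add_le_add
      (eLpNorm_le_mul_eLpNorm_of_ae_le_mul'' p hf.aestronglyMeasurable (.of_forall fun _ => le_rfl))
      (eLpNorm_le_mul_eLpNorm_of_ae_le_mul'' p hg.aestronglyMeasurable (.of_forall fun _ => le_rfl))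

variable {G : Type*} [MeasurableSpace G] [AddGroup G] [MeasurableAdd₂ G] [MeasurableNeg G]
  {ν : Measure G} {a b : G → ℝ≥0∞}

theorem lconvolution_le_rpow_mul_rpow {p : ℝ} (hp : 1 ≤ p) (ha : Measurable a) (hb : Measurable b)
    (x : G) : (a ⋆ₗ[ν] b) x ≤
      (∫⁻ y, a y ∂ν) ^ (1 - p⁻¹) * (a ⋆ₗ[ν] fun z => b z ^ p) x ^ p⁻¹ := by
  have hp0 : 0 < p := by linarith
  have hp1 : 0 ≤ 1 - p⁻¹ := sub_nonneg.2 (inv_le_one_of_one_le₀ hp)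
  refine le_trans (lintegral_mono fun y => le_of_eq ?_)
    (ENNReal.lintegral_mul_norm_pow_le ha.aemeasurable (by fun_prop) hp1 (by positivity)
      (sub_add_cancel 1 p⁻¹))
  rw [ENNReal.mul_rpow_of_nonneg _ _ (by positivity), ← mul_assoc,
    ← ENNReal.rpow_add_of_nonneg _ _ hp1 (by positivity), ENNReal.rpow_rpow_inv hp0.ne']
  simp

variable [ν.IsAddLeftInvariant] [SFinite ν]

theorem lintegral_lconvolution (ha : Measurable a) (hb : Measurable b) :
    ∫⁻ x, (a ⋆ₗ[ν] b) x ∂ν = (∫⁻ x, a x ∂ν) * ∫⁻ x, b x ∂ν := by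
  simp only [lconvolution_def]
  rw [lintegral_lintegral_swap (by fun_prop), ← lintegral_mul_const _ ha]
  refine lintegral_congr fun y => ?_
  rw [lintegral_const_mul _ (by fun_prop), lintegral_add_left_eq_self]

theorem eLpNorm_lconvolution_le {p : ℝ≥0∞} (hp : 1 ≤ p) (hp_top : p ≠ ∞) (ha : Measurable a)
    (hb : Measurable b) :
    eLpNorm (a ⋆ₗ[ν] b) p ν ≤ (∫⁻ x, a x ∂ν) * eLpNorm b p ν := by
  lift p to ℝ≥0 using hp_top
  have hp1 : 1 ≤ (p : ℝ) := by exact_mod_cast hp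
  have hp0 : (0 : ℝ) < p := by linarith
  have hpow : ∫⁻ x, (a ⋆ₗ[ν] b) x ^ (p : ℝ) ∂ν ≤
      (∫⁻ x, a x ∂ν) ^ (p : ℝ) * ∫⁻ x, b x ^ (p : ℝ) ∂ν := calc
    _ ≤ ∫⁻ x, (∫⁻ y, a y ∂ν) ^ ((p : ℝ) - 1) * (a ⋆ₗ[ν] fun z => b z ^ (p : ℝ)) x ∂ν := by
        refine lintegral_mono fun x => ?_
        refine (ENNReal.rpow_le_rpow (lconvolution_le_rpow_mul_rpow hp1 ha hb x) hp0.le).trans_eq ?_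
        rw [ENNReal.mul_rpow_of_nonneg _ _ hp0.le, ENNReal.rpow_inv_rpow hp0.ne',
          ← ENNReal.rpow_mul, sub_mul, one_mul, inv_mul_cancel₀ hp0.ne']
    _ = (∫⁻ x, a x ∂ν) ^ (p : ℝ) * ∫⁻ x, b x ^ (p : ℝ) ∂ν := by
        rw [lintegral_const_mul _ (by fun_prop), lintegral_lconvolution ha (by fun_prop),
          ← mul_assoc]
        nth_rw 2 [← ENNReal.rpow_one (∫⁻ x, a x ∂ν)]
        rw [← ENNReal.rpow_add_of_nonneg _ _ (by linarith) zero_le_one, sub_add_cancel]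
  rw [eLpNorm_nnreal_eq_lintegral (by exact_mod_cast hp0.ne'),
    eLpNorm_nnreal_eq_lintegral (by exact_mod_cast hp0.ne')]
  refine (ENNReal.rpow_le_rpow hpow (by positivity)).trans_eq ?_
  rw [ENNReal.mul_rpow_of_nonneg _ _ (by positivity), one_div, ENNReal.rpow_rpow_inv hp0.ne']
  rfl

theorem lconvolution_apply_sub {G : Type*} [MeasurableSpace G] [AddCommGroup G] [MeasurableAdd₂ G]
    [MeasurableNeg G] {ν : Measure G} [ν.IsAddLeftInvariant] [ν.IsNegInvariant] [SFinite ν]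
    (a b : G → ℝ≥0∞) (x : G) : (a ⋆ₗ[ν] b) x = ∫⁻ y, a (x - y) * b y ∂ν := by
  rw [lconvolution_comm, lconvolution_def]
  exact lintegral_congr fun y => by rw [mul_comm, neg_add_eq_sub]

end L2Estimates

section FrequencyNorm

variable {E : Type*} [NormedAddCommGroup E]

/-- The weight `⟨ξ⟩ᵗ` with values in `[0, ∞]`. -/
def sobolevWeight (t : ℝ) (ξ : E) : ℝ≥0∞ := ENNReal.ofReal (japaneseBracket ξ ^ t)

theorem sobolevWeight_add (t u : ℝ) :
    (sobolevWeight (t + u) : E → ℝ≥0∞) = sobolevWeight t * sobolevWeight u := by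
  ext ξ
  rw [Pi.mul_apply, sobolevWeight, Real.rpow_add (japaneseBracket_pos ξ),
    ENNReal.ofReal_mul (Real.rpow_nonneg (japaneseBracket_pos ξ).le t), sobolevWeight,
    sobolevWeight]

theorem sobolevWeight_zero : (sobolevWeight 0 : E → ℝ≥0∞) = 1 := by
  ext ξ
  simp [sobolevWeight]

theorem sobolevWeight_neg_mul_self (t : ℝ) (ξ : E) :
    sobolevWeight (-t) ξ * sobolevWeight t ξ = 1 := by
  rw [← Pi.mul_apply, ← sobolevWeight_add, neg_add_cancel, sobolevWeight_zero, Pi.one_apply]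

theorem sobolevWeight_mono {t u : ℝ} (h : t ≤ u) (ξ : E) : sobolevWeight t ξ ≤ sobolevWeight u ξ :=
  ENNReal.ofReal_le_ofReal (Real.rpow_le_rpow_of_exponent_le (one_le_japaneseBracket ξ) h)

theorem sobolevWeight_le {t : ℝ} (ht : 1 ≤ t) (ξ η : E) :
    sobolevWeight t ξ ≤ ENNReal.ofReal (2 ^ t) *
      (sobolevWeight t (ξ - η) + ‖η‖ₑ * sobolevWeight (t - 1) η) := by
  have hp := japaneseBracket_pos (ξ - η)
  have hq := japaneseBracket_pos η
  refine (ENNReal.ofReal_le_ofReal (japaneseBracket_rpow_le ht ξ η)).trans_eq ?_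
  rw [ENNReal.ofReal_mul (by positivity), ENNReal.ofReal_add (by positivity) (by positivity),
    ENNReal.ofReal_mul (norm_nonneg _), ofReal_norm]
  rfl

theorem enorm_mul_sobolevWeight_sub_one_le (t : ℝ) (ξ : E) :
    ‖ξ‖ₑ * sobolevWeight (t - 1) ξ ≤ sobolevWeight t ξ := by
  rw [← ofReal_norm, sobolevWeight, ← ENNReal.ofReal_mul (norm_nonneg ξ)]
  refine ENNReal.ofReal_le_ofReal ?_
  have hp := japaneseBracket_pos ξ
  calc _ ≤ japaneseBracket ξ * japaneseBracket ξ ^ (t - 1) := by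
        gcongr
        exact norm_le_japaneseBracket ξ
    _ = _ := by rw [Real.rpow_sub_one hp.ne', mul_div_cancel₀ _ hp.ne']

theorem sobolevWeight_le_add {t ε : ℝ} (hε : ε ≤ 1) (ξ : E) :
    sobolevWeight t ξ ≤ sobolevWeight (t - ε) ξ + ‖ξ‖ₑ * sobolevWeight (t - 1) ξ := by
  have hp := japaneseBracket_pos ξ
  rw [← ofReal_norm, sobolevWeight, sobolevWeight, sobolevWeight,
    ← ENNReal.ofReal_mul (norm_nonneg ξ), ← ENNReal.ofReal_add (by positivity) (by positivity)]
  refine ENNReal.ofReal_le_ofReal ?_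
  calc japaneseBracket ξ ^ t = japaneseBracket ξ * japaneseBracket ξ ^ (t - 1) := by
        rw [Real.rpow_sub_one hp.ne', mul_div_cancel₀ _ hp.ne']
    _ ≤ (1 + ‖ξ‖) * japaneseBracket ξ ^ (t - 1) := by
        gcongr
        simpa [japaneseBracket, add_comm] using japaneseBracket_le_norm_sub_add ξ 0
    _ ≤ _ := by
        rw [add_mul, one_mul]
        gcongr
        exact one_le_japaneseBracket ξ

theorem enorm_japaneseBracket_rpow_sub_le {t ε : ℝ} (ht : 1 ≤ t) (hε : ε ≤ 1) (ξ η : E) :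
    ‖japaneseBracket ξ ^ t - japaneseBracket η ^ t‖ₑ ≤ ENNReal.ofReal (t * 2 ^ (t - 1)) *
      (sobolevWeight t (ξ - η) + sobolevWeight ε (ξ - η) * sobolevWeight (t - ε) η) := by
  have hp := japaneseBracket_pos (ξ - η)
  have hq := japaneseBracket_pos η
  rw [Real.enorm_eq_ofReal_abs]
  refine (ENNReal.ofReal_le_ofReal (abs_japaneseBracket_rpow_sub_le ht hε ξ η)).trans_eq ?_
  rw [ENNReal.ofReal_mul (by positivity), ENNReal.ofReal_add (by positivity) (by positivity),
    ENNReal.ofReal_mul (p := japaneseBracket (ξ - η) ^ ε) (by positivity)]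
  rfl

theorem enorm_sub_mul_sobolevWeight_le {t ε : ℝ} (ht : 1 ≤ t) (hε : ε ≤ 1) (ξ η : E) :
    ‖ξ - η‖ₑ * sobolevWeight (t - 1) ξ ≤ ENNReal.ofReal (2 ^ (t - 1)) *
      (sobolevWeight t (ξ - η) + sobolevWeight ε (ξ - η) * sobolevWeight (t - ε) η) := by
  have hp := japaneseBracket_pos (ξ - η)
  have hq := japaneseBracket_pos η
  rw [← ofReal_norm, sobolevWeight, ← ENNReal.ofReal_mul (norm_nonneg _)]
  refine (ENNReal.ofReal_le_ofReal (norm_sub_mul_japaneseBracket_rpow_le ht hε ξ η)).trans_eq ?_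
  rw [ENNReal.ofReal_mul (by positivity), ENNReal.ofReal_add (by positivity) (by positivity),
    ENNReal.ofReal_mul (by positivity)]
  rfl

theorem sobolevWeight_sub_le {t ε κ : ℝ} (hε : 0 < ε) (hεt : ε ≤ t) (hκ : 0 < κ) (ξ : E) :
    sobolevWeight (t - ε) ξ ≤
      ENNReal.ofReal κ * sobolevWeight t ξ + ENNReal.ofReal ((κ⁻¹ ^ ε⁻¹) ^ (t - ε)) := by
  have hp := japaneseBracket_pos ξ
  rw [sobolevWeight, sobolevWeight, ← ENNReal.ofReal_mul hκ.le,
    ← ENNReal.ofReal_add (by positivity) (by positivity)]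
  exact ENNReal.ofReal_le_ofReal (japaneseBracket_rpow_sub_le hε hεt hκ ξ)

theorem enorm_japaneseBracket_rpow_smul {F : Type*} [NormedAddCommGroup F] [NormedSpace ℝ F] (t : ℝ)
    (ξ : E) (z : F) : ‖japaneseBracket ξ ^ t • z‖ₑ = sobolevWeight t ξ * ‖z‖ₑ := by
  rw [enorm_smul, Real.enorm_of_nonneg (Real.rpow_nonneg (japaneseBracket_pos ξ).le t)]
  rfl

variable [MeasurableSpace E] [BorelSpace E]

@[fun_prop]
theorem measurable_sobolevWeight (t : ℝ) : Measurable (sobolevWeight t : E → ℝ≥0∞) :=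
  (continuous_japaneseBracket.measurable.pow_const t).ennreal_ofReal

variable [InnerProductSpace ℝ E] [FiniteDimensional ℝ E]

/-- The `Hᵗ` norm on the Fourier side: `freqNorm t |û|` is the `Hᵗ` norm of `u`. -/
def freqNorm (t : ℝ) (f : E → ℝ≥0∞) : ℝ≥0∞ := eLpNorm (sobolevWeight t * f) 2 volume

theorem freqNorm_mono_exponent {t u : ℝ} (h : t ≤ u) (f : E → ℝ≥0∞) : freqNorm t f ≤ freqNorm u f :=
  eLpNorm_mono_enorm fun ξ => mul_le_mul_left (sobolevWeight_mono h ξ) (f ξ)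

theorem freqNorm_zero (f : E → ℝ≥0∞) : freqNorm 0 f = eLpNorm f 2 volume := by
  rw [freqNorm, sobolevWeight_zero, one_mul]

theorem freqNorm_sq (t : ℝ) (f : E → ℝ≥0∞) :
    freqNorm t f ^ 2 = ∫⁻ ξ, ENNReal.ofReal ((1 + ‖ξ‖ ^ 2) ^ t) * f ξ ^ 2 := by
  rw [freqNorm, eLpNorm_two_sq_eq_lintegral]
  refine lintegral_congr fun ξ => ?_
  rw [enorm_eq_self, Pi.mul_apply, mul_pow, sobolevWeight,
    ← ENNReal.ofReal_pow (Real.rpow_nonneg (japaneseBracket_pos ξ).le t), ← Real.rpow_mul_natCast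
      (japaneseBracket_pos ξ).le, mul_comm t, Real.rpow_natCast_mul (japaneseBracket_pos ξ).le,
    japaneseBracket_sq]

theorem freqNorm_sobolevWeight_neg_lt_top {t u : ℝ} (h : (Module.finrank ℝ E : ℝ) / 2 < u - t) :
    freqNorm t (sobolevWeight (-u) : E → ℝ≥0∞) < ∞ := by
  have hint : Integrable fun ξ : E => (1 + ‖ξ‖ ^ 2) ^ (-(2 * (u - t)) / 2) :=
    integrable_rpow_neg_one_add_norm_sq (by linarith)
  have hsq : freqNorm (-(u - t)) (1 : E → ℝ≥0∞) ^ 2 < ∞ := by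
    rw [freqNorm_sq]
    refine lt_of_eq_of_lt (lintegral_congr fun ξ => ?_) hint.lintegral_lt_top
    rw [Pi.one_apply, one_pow, mul_one]
    ring_nf
  rw [freqNorm, ← sobolevWeight_add, ← mul_one (sobolevWeight _)]
  convert (ENNReal.pow_lt_top_iff.1 hsq).resolve_right two_ne_zero using 1
  rw [freqNorm]
  ring_nf

theorem exists_lintegral_sobolevWeight_mul_le {t ε : ℝ}
    (h : (Module.finrank ℝ E : ℝ) / 2 < t - ε) :
    ∃ C : ℝ≥0, ∀ f : E → ℝ≥0∞, Measurable f → ∫⁻ ξ, sobolevWeight ε ξ * f ξ ≤ C * freqNorm t f := by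
  refine ⟨(freqNorm ε (sobolevWeight (-t) : E → ℝ≥0∞)).toNNReal, fun f hf => ?_⟩
  rw [ENNReal.coe_toNNReal (freqNorm_sobolevWeight_neg_lt_top h).ne]
  refine le_trans (lintegral_mono fun ξ => le_of_eq ?_)
    (lintegral_mul_le_eLpNorm_two_mul (by fun_prop) (by fun_prop))
  simp only [Pi.mul_apply]
  rw [mul_assoc, ← mul_assoc (sobolevWeight (-t) ξ), sobolevWeight_neg_mul_self, one_mul]

theorem exists_lintegral_le_freqNorm {t : ℝ} (h : (Module.finrank ℝ E : ℝ) / 2 < t) :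
    ∃ C : ℝ≥0, ∀ f : E → ℝ≥0∞, Measurable f → ∫⁻ ξ, f ξ ≤ C * freqNorm t f := by
  simpa [sobolevWeight_zero] using exists_lintegral_sobolevWeight_mul_le (ε := 0) (by simpa using h)

/-- The Fourier side of the commutator estimate `‖[⟨D⟩ᵗ, a] b‖_{L²} ≲ ‖a‖_{Hᵗ} ‖b‖_{Hᵗ⁻ᵋ}`. -/
theorem exists_eLpNorm_lconvolution_add_le {t ε : ℝ}
    (h : (Module.finrank ℝ E : ℝ) / 2 < t - ε) :
    ∃ C : ℝ≥0, ∀ a b : E → ℝ≥0∞, Measurable a → Measurable b →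
      eLpNorm ((sobolevWeight t * a) ⋆ₗ b + (sobolevWeight ε * a) ⋆ₗ (sobolevWeight (t - ε) * b)) 2
        volume ≤ C * freqNorm t a * freqNorm (t - ε) b := by
  obtain ⟨C₁, hC₁⟩ := exists_lintegral_sobolevWeight_mul_le h
  obtain ⟨C₂, hC₂⟩ := exists_lintegral_le_freqNorm h
  refine ⟨C₁ + C₂, fun a b ha hb => ?_⟩
  calc _ ≤ eLpNorm ((sobolevWeight t * a) ⋆ₗ b) 2 volume +
        eLpNorm ((sobolevWeight ε * a) ⋆ₗ (sobolevWeight (t - ε) * b)) 2 volume :=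
        eLpNorm_add_le (by fun_prop) (by fun_prop) one_le_two
    _ ≤ (∫⁻ ξ, b ξ) * freqNorm t a + (∫⁻ ξ, sobolevWeight ε ξ * a ξ) * freqNorm (t - ε) b := by
        rw [lconvolution_comm (f := sobolevWeight t * a)]
        gcongr
        · exact eLpNorm_lconvolution_le one_le_two (by simp) hb (by fun_prop)
        · exact eLpNorm_lconvolution_le one_le_two (by simp) (by fun_prop) (by fun_prop)
    _ ≤ (C₂ * freqNorm (t - ε) b) * freqNorm t a + (C₁ * freqNorm t a) * freqNorm (t - ε) b := by
        gcongr
        exacts [hC₂ b hb, hC₁ a ha]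
    _ = _ := by push_cast; ring

theorem freqNorm_sub_le {t ε κ : ℝ} (hε : 0 < ε) (hεt : ε ≤ t) (hκ : 0 < κ) {f : E → ℝ≥0∞}
    (hf : Measurable f) : freqNorm (t - ε) f ≤
      ENNReal.ofReal κ * freqNorm t f + ENNReal.ofReal ((κ⁻¹ ^ ε⁻¹) ^ (t - ε)) * freqNorm 0 f := by
  rw [freqNorm_zero]
  refine eLpNorm_le_mul_add_mul one_le_two (by fun_prop) hf.aemeasurable fun ξ => ?_
  rw [Pi.mul_apply, Pi.mul_apply, ← mul_assoc, ← add_mul]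
  gcongr
  exact sobolevWeight_sub_le hε hεt hκ ξ

theorem exists_freqNorm_le_of_le_freqNorm_sub {t ε : ℝ} (hε : 0 < ε) (hεt : ε ≤ t) (c : ℝ≥0) :
    ∃ K : ℝ≥0, ∀ (f : E → ℝ≥0∞) (X : ℝ≥0∞), Measurable f → freqNorm t f < ∞ →
      freqNorm t f ≤ c * freqNorm (t - ε) f + X → freqNorm t f ≤ K * freqNorm 0 f + 2 * X := by
  set κ : ℝ≥0 := (2 * (c + 1))⁻¹
  set D : ℝ≥0 := (((κ : ℝ)⁻¹ ^ ε⁻¹) ^ (t - ε)).toNNReal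
  refine ⟨2 * c * D, fun f X hf hfin h => ?_⟩
  have hinterp : freqNorm (t - ε) f ≤ κ * freqNorm t f + D * freqNorm 0 f := by
    have hκ : 0 < (κ : ℝ) := by positivity
    simpa [D, ENNReal.ofReal] using freqNorm_sub_le hε hεt hκ hf
  have hcκ : c * κ ≤ 2⁻¹ := by
    rw [← div_eq_mul_inv, div_le_iff₀ (by positivity), inv_mul_cancel_left₀ two_ne_zero]
    exact le_self_add
  have hhalf : freqNorm t f ≤ 2⁻¹ * freqNorm t f + (c * D * freqNorm 0 f + X) := calc
    _ ≤ c * (κ * freqNorm t f + D * freqNorm 0 f) + X := h.trans (by gcongr)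
    _ = ↑(c * κ) * freqNorm t f + (c * D * freqNorm 0 f + X) := by push_cast; ring
    _ ≤ ↑(2⁻¹ : ℝ≥0) * freqNorm t f + (c * D * freqNorm 0 f + X) := by gcongr
    _ = _ := by rw [ENNReal.coe_inv two_ne_zero, ENNReal.coe_ofNat]
  have hdouble : freqNorm t f + freqNorm t f ≤ freqNorm t f + 2 * (c * D * freqNorm 0 f + X) := calc
    _ = 2 * freqNorm t f := (two_mul _).symm
    _ ≤ 2 * (2⁻¹ * freqNorm t f + (c * D * freqNorm 0 f + X)) := by gcongr
    _ = _ := by rw [mul_add, ENNReal.mul_inv_cancel_left two_ne_zero ENNReal.ofNat_ne_top]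
  refine ((ENNReal.add_le_add_iff_left hfin.ne).1 hdouble).trans_eq ?_
  push_cast
  ring

end FrequencyNorm

section FourierL1L2

variable {E H : Type*} [NormedAddCommGroup E] [InnerProductSpace ℝ E] [FiniteDimensional ℝ E]
  [MeasurableSpace E] [BorelSpace E] [NormedAddCommGroup H] [InnerProductSpace ℂ H]

theorem continuous_fourier_of_integrable {f : E → H} (hf : Integrable f) : Continuous (𝓕 f) :=
  VectorFourier.fourierIntegral_continuous Real.continuous_fourierChar
    (by simp only [innerₗ_apply_apply]; fun_prop) hf

theorem continuous_fourierInv_of_integrable {f : E → H} (hf : Integrable f) : Continuous (𝓕⁻ f) :=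
  VectorFourier.fourierIntegral_continuous Real.continuous_fourierChar
    (by simp only [LinearMap.neg_apply, innerₗ_apply_apply]; fun_prop) hf

theorem norm_fourier_le_integral_norm (f : E → H) (ξ : E) : ‖𝓕 f ξ‖ ≤ ∫ x, ‖f x‖ :=
  VectorFourier.norm_fourierIntegral_le_integral_norm _ _ _ _ _

theorem norm_fourierInv_le_integral_norm (f : E → H) (x : E) : ‖𝓕⁻ f x‖ ≤ ∫ ξ, ‖f ξ‖ :=
  VectorFourier.norm_fourierIntegral_le_integral_norm _ _ _ _ _

/-- The convolution `m̂ ∗ Y`, that is, multiplication by `m` on the Fourier side. -/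
def fourierMul (m : E → ℂ) (Y : E → H) (ξ : E) : H := ∫ η, 𝓕 m (ξ - η) • Y η

theorem integrable_fourier_sub_smul {m : E → ℂ} {Y : E → H} (hm : Integrable m) (hY : Integrable Y)
    (ξ : E) : Integrable fun η => 𝓕 m (ξ - η) • Y η := by
  have := continuous_fourier_of_integrable hm
  exact hY.bdd_smul (∫ x, ‖m x‖) (Continuous.aestronglyMeasurable (by fun_prop))
    (.of_forall fun η => norm_fourier_le_integral_norm m _)

theorem integrable_smul_fourierInv {m : E → ℂ} {Y : E → H} (hm : Integrable m)
    (hY : Integrable Y) : Integrable fun x => m x • 𝓕⁻ Y x :=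
  hm.smul_bdd (∫ ξ, ‖Y ξ‖) (continuous_fourierInv_of_integrable hY).aestronglyMeasurable
    (.of_forall fun x => norm_fourierInv_le_integral_norm Y x)

variable [CompleteSpace H]

theorem integral_fourierInv_smul_eq {g : E → ℂ} {Y : E → H} (hg : Integrable g)
    (hY : Integrable Y) : ∫ ξ, 𝓕⁻ g ξ • Y ξ = ∫ x, g x • 𝓕⁻ Y x := by
  have hflip : (-innerₗ E).flip = -innerₗ E := by ext x y; simp [real_inner_comm]
  have h := VectorFourier.integral_fourierIntegral_smul_eq_flip (L := -innerₗ E) (μ := volume)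
    (ν := volume) Real.continuous_fourierChar
    (by simp only [LinearMap.neg_apply, innerₗ_apply_apply]; fun_prop) hg hY
  rw [hflip] at h
  exact h

theorem integral_inner_fourier_eq {Y f : E → H} (hY : Integrable Y) (hf : Integrable f) :
    ∫ ξ, inner ℂ (Y ξ) (𝓕 f ξ) = ∫ x, inner ℂ (𝓕⁻ Y x) (f x) := by
  have hflip : -(-innerₗ E).flip = innerₗ E := by ext x y; simp [real_inner_comm]
  have h := VectorFourier.integral_sesq_fourierIntegral_eq_neg_flip (L := -innerₗ E) (μ := volume)
    (ν := volume) (innerSL ℂ) Real.continuous_fourierChar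
    (by simp only [LinearMap.neg_apply, innerₗ_apply_apply]; fun_prop) hY hf
  rw [hflip] at h
  exact h.symm

/-- The Fourier transform on `L²` is defined by density; on `L¹ ∩ L²` it is still the integral. -/
theorem fourierInv_toLp_ae_eq {Y : E → H} (hY : Integrable Y) (hY2 : MemLp Y 2) :
    (𝓕⁻ (hY2.toLp Y) : Lp (α := E) H 2 volume) =ᵐ[volume] 𝓕⁻ Y := by
  refine ae_eq_of_integral_contDiff_smul_eq ((Lp.memLp _).locallyIntegrable one_le_two)
    (continuous_fourierInv_of_integrable hY).locallyIntegrable fun g hg hgc => ?_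
  have hsupp : HasCompactSupport (Complex.ofRealCLM ∘ g) := hgc.comp_left (map_zero _)
  set G := hsupp.toSchwartzMap (Complex.ofRealCLM.contDiff.comp hg)
  have hG (x : E) (z : H) : g x • z = G x • z := (Complex.coe_smul (g x) z).symm
  have hduality := congrArg (· G) (Lp.fourierInv_toTemperedDistribution_eq (hY2.toLp Y))
  simp only [TemperedDistribution.fourierInv_apply, Lp.toTemperedDistribution_apply] at hduality
  simp only [hG]
  rw [← hduality, ← integral_fourierInv_smul_eq G.integrable hY, ← SchwartzMap.fourierInv_coe]
  refine integral_congr_ae (hY2.coeFn_toLp.mono fun x hx => ?_)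
  simp only [hx]

theorem eLpNorm_fourierInv_eq {Y : E → H} (hY : Integrable Y) (hY2 : MemLp Y 2) :
    eLpNorm (𝓕⁻ Y) 2 volume = eLpNorm Y 2 volume := by
  rw [← eLpNorm_congr_ae (fourierInv_toLp_ae_eq hY hY2), ← eLpNorm_congr_ae hY2.coeFn_toLp,
    ← Lp.enorm_def, ← Lp.enorm_def, ← enorm_norm, ← Lp.norm_fourier_eq,
    FourierTransform.fourier_fourierInv_eq, enorm_norm]

theorem memLp_fourierInv {Y : E → H} (hY : Integrable Y) (hY2 : MemLp Y 2) : MemLp (𝓕⁻ Y) 2 :=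
  ⟨(continuous_fourierInv_of_integrable hY).aestronglyMeasurable,
    (eLpNorm_fourierInv_eq hY hY2).trans_lt hY2.2⟩

theorem integral_norm_sq_fourierInv_eq {Y : E → H} (hY : Integrable Y) (hY2 : MemLp Y 2) :
    ∫ x, ‖𝓕⁻ Y x‖ ^ 2 = ∫ ξ, ‖Y ξ‖ ^ 2 := by
  rw [integral_norm_sq_eq hY.1, ← eLpNorm_fourierInv_eq hY hY2,
    integral_norm_sq_eq (memLp_fourierInv hY hY2).1]

theorem fourierMul_eq {m : E → ℂ} {Y : E → H} (hm : Integrable m) (hY : Integrable Y) :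
    fourierMul m Y = 𝓕 fun x => m x • 𝓕⁻ Y x := by
  ext ξ
  set g : E → ℂ := fun x => Real.fourierChar (-inner ℝ x ξ) • m x
  have hg : Integrable g := (Real.fourierIntegral_convergent_iff ξ).2 hm
  have hshift (η : E) : 𝓕 m (ξ - η) = 𝓕⁻ g η := by
    rw [Real.fourier_eq, Real.fourierInv_eq]
    refine integral_congr_ae (.of_forall fun x => ?_)
    simp only [g]
    rw [smul_smul, ← AddChar.map_add_eq_mul, inner_sub_right, neg_sub, sub_eq_add_neg]
  simp_rw [fourierMul, hshift]
  rw [integral_fourierInv_smul_eq hg hY, Real.fourier_eq]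
  simp only [g, smul_assoc]

theorem continuous_fourierMul {m : E → ℂ} {Y : E → H} (hm : Integrable m) (hY : Integrable Y) :
    Continuous (fourierMul m Y) := by
  rw [fourierMul_eq hm hY]
  exact continuous_fourier_of_integrable (integrable_smul_fourierInv hm hY)

theorem norm_fourierMul_le {m : E → ℂ} {Y : E → H} (hm : Integrable m) (hY : Integrable Y) (ξ : E) :
    ‖fourierMul m Y ξ‖ ≤ ∫ x, ‖m x • 𝓕⁻ Y x‖ := by
  rw [fourierMul_eq hm hY]
  exact norm_fourier_le_integral_norm _ ξ

theorem integral_inner_fourierMul {m : E → ℂ} {Y : E → H} (hm : Integrable m) (hY : Integrable Y) :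
    ∫ ξ, inner ℂ (Y ξ) (fourierMul m Y ξ) = ∫ x, m x * (‖𝓕⁻ Y x‖ ^ 2 : ℝ) := by
  rw [fourierMul_eq hm hY, integral_inner_fourier_eq hY (integrable_smul_fourierInv hm hY)]
  refine integral_congr_ae (.of_forall fun x => ?_)
  simp only [inner_smul_right, inner_self_eq_norm_sq_to_K]
  push_cast
  rfl

/-- On the physical side the quadratic form is `∫ (1 + m) |𝓕⁻ Y|²`. -/
theorem mul_integral_norm_sq_le_re_integral_inner {m : E → ℂ} {b : ℝ} {Y : E → H}
    (hm : Integrable m) (hb : ∀ x, b ≤ 1 + (m x).re) (hY : Integrable Y) (hY2 : MemLp Y 2) :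
    b * ∫ ξ, ‖Y ξ‖ ^ 2 ≤ (∫ ξ, inner ℂ (Y ξ) (Y ξ + fourierMul m Y ξ)).re := by
  set y := 𝓕⁻ Y
  have hYsq : Integrable fun ξ => ‖Y ξ‖ ^ 2 := hY2.integrable_norm_pow two_ne_zero
  have hysq : Integrable fun x => ‖y x‖ ^ 2 :=
    (memLp_fourierInv hY hY2).integrable_norm_pow two_ne_zero
  have hinner : Integrable fun ξ => inner ℂ (Y ξ) (fourierMul m Y ξ) :=
    (hY.norm.mul_const (∫ x, ‖m x • y x‖)).mono'
      (hY.1.inner (continuous_fourierMul hm hY).aestronglyMeasurable)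
      (.of_forall fun ξ => (norm_inner_le_norm _ _).trans
        (mul_le_mul_of_nonneg_left (norm_fourierMul_le hm hY ξ) (norm_nonneg _)))
  have hmy : Integrable fun x => m x * (‖y x‖ ^ 2 : ℝ) := by
    refine hm.mul_bdd (c := (∫ ξ, ‖Y ξ‖) ^ 2) hysq.ofReal.1 (.of_forall fun x => ?_)
    rw [Complex.norm_real, norm_pow, norm_norm]
    gcongr
    exact norm_fourierInv_le_integral_norm Y x
  have hself (ξ : E) : inner ℂ (Y ξ) (Y ξ) = ((‖Y ξ‖ ^ 2 : ℝ) : ℂ) := by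
    rw [inner_self_eq_norm_sq_to_K]; push_cast; rfl
  simp_rw [inner_add_right, hself]
  have hre : (∫ x, m x * (‖y x‖ ^ 2 : ℝ)).re = ∫ x, (m x).re * ‖y x‖ ^ 2 := by
    rw [← RCLike.re_eq_complex_re, ← integral_re hmy]
    simp only [RCLike.re_eq_complex_re, Complex.re_mul_ofReal]
  have hmyre : Integrable fun x => (m x).re * ‖y x‖ ^ 2 := by
    simpa only [RCLike.re_eq_complex_re, Complex.re_mul_ofReal] using hmy.re
  have hYofReal : Integrable fun ξ => ((‖Y ξ‖ ^ 2 : ℝ) : ℂ) := hYsq.ofReal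
  rw [integral_add hYofReal hinner, integral_inner_fourierMul hm hY,
    integral_complex_ofReal, Complex.add_re, Complex.ofReal_re, hre,
    ← integral_norm_sq_fourierInv_eq hY hY2, ← integral_add hysq hmyre, ← integral_const_mul]
  refine integral_mono (hysq.const_mul b) (hysq.add hmyre) fun x => ?_
  calc b * ‖y x‖ ^ 2 ≤ (1 + (m x).re) * ‖y x‖ ^ 2 := by gcongr; exact hb x
    _ = ‖y x‖ ^ 2 + (m x).re * ‖y x‖ ^ 2 := by ring

end FourierL1L2

section EllipticCorrection

variable {E H : Type*} [NormedAddCommGroup E] [InnerProductSpace ℝ E] [FiniteDimensional ℝ E]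
  [MeasurableSpace E] [BorelSpace E] [NormedAddCommGroup H] [InnerProductSpace ℂ H]

theorem freqNorm_enorm_eq (t : ℝ) (Z : E → H) : freqNorm t (fun ξ => ‖Z ξ‖ₑ) =
    eLpNorm (fun ξ => japaneseBracket ξ ^ t • Z ξ) 2 volume := by
  rw [← eLpNorm_enorm]
  simp only [enorm_japaneseBracket_rpow_smul]
  rfl

/-- The remainder left when the weight `⟨ξ⟩ᵗ` is moved past `m̂ ∗` in `m̂ ∗ (Z + W)`: a commutator
in `Z`, and the full product in `W`. -/
def weightRemainder (t : ℝ) (m : E → ℂ) (Z W : E → H) (ξ : E) : H :=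
  japaneseBracket ξ ^ t • fourierMul m (Z + W) ξ -
    fourierMul m (fun η => japaneseBracket η ^ t • Z η) ξ

theorem enorm_weightRemainder_le_lintegral {t : ℝ} {m : E → ℂ} {Z W : E → H} (hm : Integrable m)
    (hZ : Integrable Z) (hZt : Integrable fun ξ => japaneseBracket ξ ^ t • Z ξ) (hW : Integrable W)
    (ξ : E) :
    ‖weightRemainder t m Z W ξ‖ₑ ≤
      ∫⁻ η, ‖𝓕 m (ξ - η)‖ₑ * (‖japaneseBracket ξ ^ t - japaneseBracket η ^ t‖ₑ * ‖Z η‖ₑ +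
        sobolevWeight t ξ * ‖W η‖ₑ) := by
  have hZW : Integrable fun η => japaneseBracket ξ ^ t • 𝓕 m (ξ - η) • (Z η + W η) :=
    (integrable_fourier_sub_smul hm (hZ.add hW) ξ).smul _
  rw [weightRemainder, fourierMul, fourierMul, ← integral_smul]
  simp only [Pi.add_apply]
  rw [← integral_sub hZW (integrable_fourier_sub_smul hm hZt ξ)]
  refine (enorm_integral_le_lintegral_enorm _).trans (lintegral_mono fun η => ?_)
  have hsplit : japaneseBracket ξ ^ t • 𝓕 m (ξ - η) • (Z η + W η) -
      𝓕 m (ξ - η) • (japaneseBracket η ^ t • Z η) = 𝓕 m (ξ - η) •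
        ((japaneseBracket ξ ^ t - japaneseBracket η ^ t) • Z η + japaneseBracket ξ ^ t • W η) := by
    rw [smul_comm, ← smul_sub]
    module
  rw [hsplit, enorm_smul]
  gcongr
  refine (enorm_add_le _ _).trans_eq ?_
  rw [enorm_japaneseBracket_rpow_smul, enorm_smul]

theorem lintegral_mul_weight_add_le {t ε : ℝ} (ht : 1 ≤ t) (hε : ε ≤ 1) {a z w : E → ℝ≥0∞}
    (ha : Measurable a) (hz : Measurable z) (hw : Measurable w) (ξ : E) :
    ∫⁻ η, a (ξ - η) * (‖japaneseBracket ξ ^ t - japaneseBracket η ^ t‖ₑ * z η +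
        sobolevWeight t ξ * w η) ≤
      ENNReal.ofReal (t * 2 ^ (t - 1)) * ((sobolevWeight t * a) ⋆ₗ z +
          (sobolevWeight ε * a) ⋆ₗ (sobolevWeight (t - ε) * z) : E → ℝ≥0∞) ξ +
        ENNReal.ofReal (2 ^ t) * ((sobolevWeight t * a) ⋆ₗ w +
          a ⋆ₗ (sobolevWeight (t - 1) * (enorm * w)) : E → ℝ≥0∞) ξ := by
  simp only [Pi.add_apply, Pi.mul_apply, lconvolution_apply_sub]
  rw [← lintegral_add_left (by fun_prop), ← lintegral_add_left (by fun_prop),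
    ← lintegral_const_mul _ (by fun_prop), ← lintegral_const_mul _ (by fun_prop),
    ← lintegral_add_left (by fun_prop)]
  refine lintegral_mono fun η => ?_
  calc _ ≤ a (ξ - η) * (ENNReal.ofReal (t * 2 ^ (t - 1)) *
          (sobolevWeight t (ξ - η) + sobolevWeight ε (ξ - η) * sobolevWeight (t - ε) η) * z η +
        ENNReal.ofReal (2 ^ t) *
          (sobolevWeight t (ξ - η) + ‖η‖ₑ * sobolevWeight (t - 1) η) * w η) := by
        gcongr
        · exact enorm_japaneseBracket_rpow_sub_le ht hε ξ η
        · exact sobolevWeight_le ht ξ η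
    _ = _ := by ring

theorem exists_eLpNorm_lintegral_mul_weight_add_le {t ε : ℝ} (ht : 1 ≤ t) (hε : ε ≤ 1)
    (h : (Module.finrank ℝ E : ℝ) / 2 < t - ε) :
    ∃ C : ℝ≥0, ∀ a z w : E → ℝ≥0∞, Measurable a → Measurable z → Measurable w →
      eLpNorm (fun ξ => ∫⁻ η, a (ξ - η) * (‖japaneseBracket ξ ^ t - japaneseBracket η ^ t‖ₑ * z η +
          sobolevWeight t ξ * w η)) 2 volume ≤
        C * (freqNorm t a * (freqNorm (t - ε) z + ∫⁻ ξ, w ξ) +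
          (∫⁻ ξ, a ξ) * freqNorm (t - 1) (enorm * w)) := by
  obtain ⟨C, hC⟩ := exists_eLpNorm_lconvolution_add_le h
  set k : ℝ≥0 := (t * 2 ^ (t - 1)).toNNReal
  set l : ℝ≥0 := ((2 : ℝ) ^ t).toNNReal
  refine ⟨k * C + l, fun a z w ha hz hw => ?_⟩
  have : Measurable (enorm : E → ℝ≥0∞) := measurable_enorm
  set X := freqNorm t a * (freqNorm (t - ε) z + ∫⁻ ξ, w ξ) +
    (∫⁻ ξ, a ξ) * freqNorm (t - 1) (enorm * w)
  have hzX : eLpNorm ((sobolevWeight t * a) ⋆ₗ z +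
      (sobolevWeight ε * a) ⋆ₗ (sobolevWeight (t - ε) * z)) 2 volume ≤ C * X := by
    refine (hC a z ha hz).trans ?_
    rw [mul_assoc]
    gcongr
    exact le_add_right (by gcongr; exact le_self_add)
  have hwX : eLpNorm ((sobolevWeight t * a) ⋆ₗ w +
      a ⋆ₗ (sobolevWeight (t - 1) * (enorm * w))) 2 volume ≤ X := calc
    _ ≤ eLpNorm ((sobolevWeight t * a) ⋆ₗ w) 2 volume +
        eLpNorm (a ⋆ₗ (sobolevWeight (t - 1) * (enorm * w))) 2 volume :=
        eLpNorm_add_le (by fun_prop) (by fun_prop) one_le_two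
    _ ≤ (∫⁻ ξ, w ξ) * freqNorm t a + (∫⁻ ξ, a ξ) * freqNorm (t - 1) (enorm * w) := by
        rw [lconvolution_comm (f := sobolevWeight t * a)]
        gcongr
        · exact eLpNorm_lconvolution_le one_le_two (by simp) hw (by fun_prop)
        · exact eLpNorm_lconvolution_le one_le_two (by simp) ha (by fun_prop)
    _ ≤ X := by
        rw [mul_comm]
        exact add_le_add_left (by gcongr; exact le_add_self) _
  calc _ ≤ k * (C * X) + l * X :=
        (eLpNorm_le_mul_add_mul one_le_two (by fun_prop) (by fun_prop)
          (lintegral_mul_weight_add_le ht hε ha hz hw)).trans (by gcongr; exacts [le_rfl, le_rfl])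
    _ = _ := by push_cast; ring

/-- `Z` is the Fourier side of the correction of the source `W`: with `1 + m` bounded below by `b`,
the field `(1 + m) Z + m W` is orthogonal to `Z` at every frequency. When `Z` is a gradient this is
the weak form of the elliptic equation `div ((1 + m) ∇ψ) = -div (m W)`. -/
structure IsEllipticCorrection (m : E → ℂ) (b : ℝ≥0) (Z W : E → H) : Prop where
  integrable_coeff : Integrable m
  ne_zero : b ≠ 0
  le_one_add_re : ∀ x, b ≤ 1 + (m x).re
  stronglyMeasurable_correction : StronglyMeasurable Z
  stronglyMeasurable_source : StronglyMeasurable W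
  integrable_weighted : ∀ t : ℝ, Integrable fun ξ => japaneseBracket ξ ^ t • Z ξ
  memLp_weighted : ∀ t : ℝ, MemLp (fun ξ => japaneseBracket ξ ^ t • Z ξ) 2
  integrable_source : Integrable W
  inner_eq_zero : ∀ ξ, inner ℂ (Z ξ) (Z ξ + fourierMul m (Z + W) ξ) = 0

namespace IsEllipticCorrection

variable {m : E → ℂ} {b : ℝ≥0} {Z W : E → H}

theorem integrable_correction (h : IsEllipticCorrection m b Z W) : Integrable Z := by
  simpa only [Real.rpow_zero, one_smul] using h.integrable_weighted 0

theorem freqNorm_lt_top (h : IsEllipticCorrection m b Z W) (t : ℝ) :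
    freqNorm t (fun ξ => ‖Z ξ‖ₑ) < ∞ :=
  (freqNorm_enorm_eq t Z).trans_lt (h.memLp_weighted t).2

theorem le_inv_mul (h : IsEllipticCorrection m b Z W) {x y : ℝ≥0∞} (hxy : b * x ≤ y) :
    x ≤ ↑b⁻¹ * y := by
  rw [ENNReal.coe_inv h.ne_zero]
  exact (ENNReal.mul_le_iff_le_inv (ENNReal.coe_ne_zero.2 h.ne_zero) ENNReal.coe_ne_top).1 hxy

end IsEllipticCorrection

variable [CompleteSpace H]

theorem mul_eLpNorm_le_of_inner_eq_zero {m : E → ℂ} {b : ℝ≥0} {Y R : E → H} (hm : Integrable m)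
    (hb : ∀ x, b ≤ 1 + (m x).re) (hY : Integrable Y) (hY2 : MemLp Y 2)
    (hR : AEStronglyMeasurable R)
    (h : ∀ ξ, inner ℂ (Y ξ) (Y ξ + fourierMul m Y ξ + R ξ) = 0) :
    b * eLpNorm Y 2 volume ≤ eLpNorm R 2 volume := by
  have hinner (ξ : E) : inner ℂ (Y ξ) (Y ξ + fourierMul m Y ξ) = -inner ℂ (Y ξ) (R ξ) :=
    eq_neg_of_add_eq_zero_left (by rw [← inner_add_right, h])
  have hre := mul_integral_norm_sq_le_re_integral_inner hm hb hY hY2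
  simp_rw [hinner, integral_norm_sq_eq hY.1] at hre
  have hsq : b * eLpNorm Y 2 volume ^ 2 ≤ eLpNorm Y 2 volume * eLpNorm R 2 volume := calc
    _ = ENNReal.ofReal (b * (eLpNorm Y 2 volume ^ 2).toReal) := by
        rw [ENNReal.ofReal_mul b.coe_nonneg, ENNReal.ofReal_coe_nnreal,
          ENNReal.ofReal_toReal (ENNReal.pow_ne_top hY2.2.ne)]
    _ ≤ ‖∫ ξ, -inner ℂ (Y ξ) (R ξ)‖ₑ := by
        rw [← ofReal_norm]
        exact ENNReal.ofReal_le_ofReal (hre.trans (Complex.re_le_norm _))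
    _ ≤ ∫⁻ ξ, ‖Y ξ‖ₑ * ‖R ξ‖ₑ := by
        refine (enorm_integral_le_lintegral_enorm _).trans (lintegral_mono fun ξ => ?_)
        rw [enorm_neg, ← ofReal_norm, ← ofReal_norm, ← ofReal_norm,
          ← ENNReal.ofReal_mul (norm_nonneg _)]
        exact ENNReal.ofReal_le_ofReal (norm_inner_le_norm _ _)
    _ ≤ _ := by
        simpa only [eLpNorm_enorm] using lintegral_mul_le_eLpNorm_two_mul hY.1.enorm hR.enorm
  rcases eq_or_ne (eLpNorm Y 2 volume) 0 with h0 | h0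
  · simp [h0]
  · rwa [sq, mul_left_comm, ENNReal.mul_le_mul_iff_right h0 hY2.2.ne] at hsq

namespace IsEllipticCorrection

variable {m : E → ℂ} {b : ℝ≥0} {Z W : E → H}

/-- Multiplying the equation by the weight `⟨ξ⟩ᵗ` leaves a commutator. -/
theorem mul_freqNorm_le_eLpNorm_weightRemainder (h : IsEllipticCorrection m b Z W) (t : ℝ) :
    b * freqNorm t (fun ξ => ‖Z ξ‖ₑ) ≤
      eLpNorm (weightRemainder t m Z W) 2 volume := by
  have hm := h.integrable_coeff
  have hcont : Continuous (weightRemainder t m Z W) :=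
    ((continuous_japaneseBracket.rpow_const fun ξ => .inl (japaneseBracket_pos ξ).ne').smul
      (continuous_fourierMul hm (h.integrable_correction.add h.integrable_source))).sub
      (continuous_fourierMul hm (h.integrable_weighted t))
  rw [freqNorm_enorm_eq]
  refine mul_eLpNorm_le_of_inner_eq_zero hm h.le_one_add_re (h.integrable_weighted t)
    (h.memLp_weighted t) hcont.aestronglyMeasurable fun ξ => ?_
  rw [weightRemainder, add_assoc, add_sub_cancel, ← smul_add, inner_smul_left_eq_star_smul,
    inner_smul_right_eq_smul, h.inner_eq_zero, smul_zero, smul_zero]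

theorem mul_freqNorm_zero_le (h : IsEllipticCorrection m b Z W) :
    b * freqNorm 0 (fun ξ => ‖Z ξ‖ₑ) ≤ freqNorm 0 (fun ξ => ‖𝓕 m ξ‖ₑ) * ∫⁻ ξ, ‖W ξ‖ₑ := by
  have hm := (continuous_fourier_of_integrable h.integrable_coeff).measurable.enorm
  have hW := h.stronglyMeasurable_source.enorm
  refine (h.mul_freqNorm_le_eLpNorm_weightRemainder 0).trans ?_
  rw [freqNorm_zero, mul_comm]
  refine le_trans ?_ (eLpNorm_lconvolution_le one_le_two (by simp) hW hm)
  rw [← eLpNorm_enorm]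
  refine eLpNorm_mono_enorm fun ξ => (enorm_weightRemainder_le_lintegral h.integrable_coeff
    h.integrable_correction (h.integrable_weighted 0) h.integrable_source ξ).trans_eq ?_
  rw [lconvolution_comm, enorm_eq_self, lconvolution_apply_sub]
  simp [sobolevWeight_zero]

theorem exists_mul_freqNorm_le {t ε : ℝ} (ht : 1 ≤ t) (hε : ε ≤ 1)
    (hd : (Module.finrank ℝ E : ℝ) / 2 < t - ε) :
    ∃ C : ℝ≥0, ∀ (m : E → ℂ) (b : ℝ≥0) (Z W : E → H), IsEllipticCorrection m b Z W →
      b * freqNorm t (fun ξ => ‖Z ξ‖ₑ) ≤ C * (freqNorm t (fun ξ => ‖𝓕 m ξ‖ₑ) *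
          (freqNorm (t - ε) (fun ξ => ‖Z ξ‖ₑ) + ∫⁻ ξ, ‖W ξ‖ₑ) +
        (∫⁻ ξ, ‖𝓕 m ξ‖ₑ) * freqNorm (t - 1) fun ξ => ‖ξ‖ₑ * ‖W ξ‖ₑ) := by
  obtain ⟨C, hC⟩ := exists_eLpNorm_lintegral_mul_weight_add_le ht hε hd
  refine ⟨C, fun m b Z W h => (h.mul_freqNorm_le_eLpNorm_weightRemainder t).trans <|
    le_trans ?_ (hC (fun ξ => ‖𝓕 m ξ‖ₑ) (fun ξ => ‖Z ξ‖ₑ) (fun ξ => ‖W ξ‖ₑ)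
      (continuous_fourier_of_integrable h.integrable_coeff).measurable.enorm
      h.stronglyMeasurable_correction.enorm h.stronglyMeasurable_source.enorm)⟩
  rw [← eLpNorm_enorm]
  exact eLpNorm_mono_enorm fun ξ => enorm_weightRemainder_le_lintegral h.integrable_coeff
    h.integrable_correction (h.integrable_weighted t) h.integrable_source ξ

end IsEllipticCorrection

end EllipticCorrection

section LowFrequencies

variable {E : Type*} [NormedAddCommGroup E] [InnerProductSpace ℝ E] [FiniteDimensional ℝ E]
  [MeasurableSpace E] [BorelSpace E]

theorem integrable_inv_norm_sq_mul_rpow_neg {s : ℝ} (hd : 3 ≤ Module.finrank ℝ E)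
    (hs : (Module.finrank ℝ E : ℝ) / 2 < s + 1) :
    Integrable fun ξ : E => (‖ξ‖ ^ 2)⁻¹ * (1 + ‖ξ‖ ^ 2) ^ (-s) := by
  have : Nontrivial E := Module.nontrivial_of_finrank_pos (R := ℝ) (by omega)
  rw [integrable_fun_norm_addHaar volume (f := fun r : ℝ => (r ^ 2)⁻¹ * (1 + r ^ 2) ^ (-s))]
  obtain ⟨n, hn⟩ := Nat.exists_eq_add_of_le' hd
  have hn_real : (Module.finrank ℝ E : ℝ) = n + 3 := by rw [hn]; push_cast; rfl
  rw [hn_real] at hs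
  have hdom : Integrable fun r : ℝ => (1 + ‖r‖ ^ 2) ^ (-(2 * s - n) / 2) :=
    integrable_rpow_neg_one_add_norm_sq (by rw [Module.finrank_self]; push_cast; linarith)
  refine hdom.integrableOn.mono' (Measurable.aestronglyMeasurable (by fun_prop)) ?_
  filter_upwards [ae_restrict_mem measurableSet_Ioi] with r hr
  have hr : 0 < r := hr
  rw [hn, smul_eq_mul, Real.norm_of_nonneg (by positivity), Real.norm_of_nonneg hr.le]
  calc r ^ (n + 3 - 1) * ((r ^ 2)⁻¹ * (1 + r ^ 2) ^ (-s))
      = (r ^ 2) ^ (n / 2 : ℝ) * (1 + r ^ 2) ^ (-s) := by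
        rw [← Real.rpow_natCast_mul hr.le, Nat.cast_ofNat, mul_div_cancel₀ _ two_ne_zero,
          Real.rpow_natCast, show n + 3 - 1 = n + 2 from rfl, pow_add]
        field_simp
    _ ≤ (1 + r ^ 2) ^ (n / 2 : ℝ) * (1 + r ^ 2) ^ (-s) := by gcongr; linarith
    _ = (1 + r ^ 2) ^ (-(2 * s - n) / 2) := by
        rw [← Real.rpow_add (by positivity)]
        ring_nf

theorem freqNorm_neg_inv_enorm_lt_top {s : ℝ} (hd : 3 ≤ Module.finrank ℝ E)
    (hs : (Module.finrank ℝ E : ℝ) / 2 < s + 1) :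
    freqNorm (-s) (fun ξ : E => ENNReal.ofReal ‖ξ‖⁻¹) < ∞ := by
  refine (ENNReal.pow_lt_top_iff.1 ?_).resolve_right two_ne_zero
  rw [freqNorm_sq]
  refine lt_of_eq_of_lt (lintegral_congr fun ξ => ?_)
    (integrable_inv_norm_sq_mul_rpow_neg hd hs).lintegral_lt_top
  rw [← ENNReal.ofReal_pow (by positivity), ← ENNReal.ofReal_mul (by positivity), inv_pow, mul_comm]

/-- This is where three dimensions are needed: `|ξ|⁻¹` is square integrable near the origin. -/
theorem exists_lintegral_le_freqNorm_enorm_mul {s : ℝ} (hd : 3 ≤ Module.finrank ℝ E)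
    (hs : (Module.finrank ℝ E : ℝ) / 2 < s + 1) :
    ∃ C : ℝ≥0, ∀ f : E → ℝ≥0∞, Measurable f →
      ∫⁻ ξ, f ξ ≤ C * freqNorm s fun ξ => ‖ξ‖ₑ * f ξ := by
  have : Nontrivial E := Module.nontrivial_of_finrank_pos (R := ℝ) (by omega)
  have hfin := freqNorm_neg_inv_enorm_lt_top hd hs
  refine ⟨(freqNorm (-s) fun ξ : E => ENNReal.ofReal ‖ξ‖⁻¹).toNNReal, fun f hf => ?_⟩
  rw [ENNReal.coe_toNNReal hfin.ne]
  refine le_trans (lintegral_mono_ae ?_) (lintegral_mul_le_eLpNorm_two_mul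
    (Measurable.aemeasurable (by fun_prop)) (Measurable.aemeasurable (by fun_prop)))
  filter_upwards [Measure.ae_ne volume (0 : E)] with ξ hξ
  have hnorm : ENNReal.ofReal ‖ξ‖⁻¹ * ‖ξ‖ₑ = 1 := by
    rw [← ofReal_norm, ← ENNReal.ofReal_mul (by positivity),
      inv_mul_cancel₀ (norm_ne_zero_iff.2 hξ), ENNReal.ofReal_one]
  refine le_of_eq ?_
  simp only [Pi.mul_apply]
  calc f ξ = (sobolevWeight (-s) ξ * sobolevWeight s ξ) * (ENNReal.ofReal ‖ξ‖⁻¹ * ‖ξ‖ₑ) * f ξ := by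
        rw [sobolevWeight_neg_mul_self, hnorm, one_mul, one_mul]
    _ = _ := by ring

variable {H : Type*} [NormedAddCommGroup H] [InnerProductSpace ℂ H] [CompleteSpace H]

namespace IsEllipticCorrection

/-- The `Hˢ⁻ᵋ` norm of `Z` in the energy estimate is absorbed by interpolating with `L²`. -/
theorem exists_freqNorm_le {s : ℝ} (hd : 3 ≤ Module.finrank ℝ E)
    (hs : (Module.finrank ℝ E : ℝ) / 2 < s) (a b : ℝ≥0) :
    ∃ K : ℝ≥0, ∀ (m : E → ℂ) (Z W : E → H), IsEllipticCorrection m b Z W →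
      freqNorm s (fun ξ => ‖𝓕 m ξ‖ₑ) ≤ a →
      freqNorm s (fun ξ => ‖Z ξ‖ₑ) ≤ K * freqNorm s fun ξ => ‖ξ‖ₑ * ‖W ξ‖ₑ := by
  have hd_real : (3 : ℝ) ≤ Module.finrank ℝ E := by exact_mod_cast hd
  obtain ⟨ε, hε0, hε⟩ : ∃ ε : ℝ, 0 < ε ∧ ε < min 1 (s - Module.finrank ℝ E / 2) :=
    exists_between (lt_min one_pos (sub_pos.2 hs))
  obtain ⟨hε1, hεs⟩ := lt_min_iff.1 hε
  obtain ⟨A, hA⟩ := exists_mul_freqNorm_le (E := E) (H := H) (t := s) (by linarith) hε1.le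
    (lt_sub_comm.1 hεs)
  obtain ⟨B, hB⟩ := exists_lintegral_le_freqNorm_enorm_mul hd (hs.trans (lt_add_one s))
  obtain ⟨C, hC⟩ := exists_lintegral_le_freqNorm hs
  obtain ⟨D, hD⟩ := exists_freqNorm_le_of_le_freqNorm_sub (E := E) hε0
    (show ε ≤ s by linarith) (b⁻¹ * A * a)
  refine ⟨D * (b⁻¹ * (a * B)) + 2 * (b⁻¹ * A * (a * B + C * a)), fun m Z W h ha => ?_⟩
  set X := freqNorm s fun ξ => ‖ξ‖ₑ * ‖W ξ‖ₑ
  set z : E → ℝ≥0∞ := fun ξ => ‖Z ξ‖ₑ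
  have hW : ∫⁻ ξ, ‖W ξ‖ₑ ≤ B * X := hB _ h.stronglyMeasurable_source.enorm
  have hm : ∫⁻ ξ, ‖𝓕 m ξ‖ₑ ≤ C * a :=
    (hC _ (continuous_fourier_of_integrable h.integrable_coeff).measurable.enorm).trans (by gcongr)
  have hzero : freqNorm 0 z ≤ ↑b⁻¹ * (a * (B * X)) := by
    refine (h.le_inv_mul h.mul_freqNorm_zero_le).trans ?_
    gcongr
    exact (freqNorm_mono_exponent (by linarith) _).trans ha
  have henergy : freqNorm s z ≤ ↑(b⁻¹ * A * a) * freqNorm (s - ε) z +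
      ↑(b⁻¹ * A * (a * B + C * a)) * X := calc
    _ ≤ ↑b⁻¹ * (A * (a * (freqNorm (s - ε) z + B * X) + C * a * X)) := by
        refine (h.le_inv_mul (hA m b Z W h)).trans ?_
        gcongr
        exact freqNorm_mono_exponent (by linarith) _
    _ = _ := by push_cast; ring
  calc freqNorm s z ≤ D * freqNorm 0 z + 2 * (↑(b⁻¹ * A * (a * B + C * a)) * X) :=
        hD z _ h.stronglyMeasurable_correction.enorm (h.freqNorm_lt_top s) henergy
    _ ≤ D * (↑b⁻¹ * (a * (B * X))) + 2 * (↑(b⁻¹ * A * (a * B + C * a)) * X) := by gcongr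
    _ = _ := by push_cast; ring

theorem exists_freqNorm_add_one_le {s : ℝ} (hd : 3 ≤ Module.finrank ℝ E)
    (hs : (Module.finrank ℝ E : ℝ) / 2 < s) (a b : ℝ≥0) :
    ∃ K : ℝ≥0, ∀ (m : E → ℂ) (Z W : E → H), IsEllipticCorrection m b Z W →
      freqNorm s (fun ξ => ‖𝓕 m ξ‖ₑ) ≤ a →
      freqNorm (s + 1) (fun ξ => ‖Z ξ‖ₑ) ≤ K * (1 + freqNorm (s + 1) fun ξ => ‖𝓕 m ξ‖ₑ) *
        freqNorm s fun ξ => ‖ξ‖ₑ * ‖W ξ‖ₑ := by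
  have hd_real : (3 : ℝ) ≤ Module.finrank ℝ E := by exact_mod_cast hd
  obtain ⟨A, hA⟩ := exists_mul_freqNorm_le (E := E) (H := H) (t := s + 1) (ε := 1) (by linarith)
    le_rfl (by linarith)
  obtain ⟨B, hB⟩ := exists_lintegral_le_freqNorm_enorm_mul hd (hs.trans (lt_add_one s))
  obtain ⟨C, hC⟩ := exists_lintegral_le_freqNorm hs
  obtain ⟨D, hD⟩ := exists_freqNorm_le (H := H) hd hs a b
  refine ⟨b⁻¹ * A * (D + B + C * a), fun m Z W h ha => ?_⟩
  have henergy := h.le_inv_mul (hA m b Z W h)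
  rw [add_sub_cancel_right] at henergy
  set X := freqNorm s fun ξ => ‖ξ‖ₑ * ‖W ξ‖ₑ
  set P := freqNorm (s + 1) fun ξ => ‖𝓕 m ξ‖ₑ
  have hW : ∫⁻ ξ, ‖W ξ‖ₑ ≤ B * X := hB _ h.stronglyMeasurable_source.enorm
  have hm : ∫⁻ ξ, ‖𝓕 m ξ‖ₑ ≤ C * a :=
    (hC _ (continuous_fourier_of_integrable h.integrable_coeff).measurable.enorm).trans (by gcongr)
  calc _ ≤ ↑b⁻¹ * (A * (P * (D * X + B * X) + 1 * (C * a * X))) := by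
        rw [one_mul]
        refine henergy.trans ?_
        gcongr
        exact hD m Z W h ha
    _ ≤ ↑b⁻¹ * (A * ((1 + P) * (D * X + B * X) + (1 + P) * (C * a * X))) := by
        gcongr
        exacts [le_add_self, le_self_add]
    _ = _ := by push_cast; ring

end IsEllipticCorrection

end LowFrequencies

section SchwartzFourier

variable {E H : Type*} [NormedAddCommGroup E] [InnerProductSpace ℝ E]

theorem hasTemperateGrowth_japaneseBracket_rpow (t : ℝ) :
    Function.HasTemperateGrowth fun ξ : E => japaneseBracket ξ ^ t := by
  have hsq (ξ : E) : japaneseBracket ξ ^ t = (1 + ‖ξ‖ ^ 2) ^ (t / 2) := by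
    rw [← japaneseBracket_sq, ← Real.rpow_natCast_mul (japaneseBracket_pos ξ).le, Nat.cast_ofNat,
      mul_div_cancel₀ _ two_ne_zero]
  simpa only [hsq] using Function.hasTemperateGrowth_one_add_norm_sq_rpow E (t / 2)

variable [FiniteDimensional ℝ E] [MeasurableSpace E] [BorelSpace E]

theorem integrable_japaneseBracket_rpow_smul [NormedAddCommGroup H] [NormedSpace ℝ H] (t : ℝ)
    (f : 𝓢(E, H)) : Integrable fun ξ => japaneseBracket ξ ^ t • f ξ := by
  simpa only [← smulLeftCLM_apply_apply (hasTemperateGrowth_japaneseBracket_rpow t) f] using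
    (smulLeftCLM H (fun ξ : E => japaneseBracket ξ ^ t) f).integrable

theorem memLp_japaneseBracket_rpow_smul [NormedAddCommGroup H] [NormedSpace ℝ H] (t : ℝ)
    (f : 𝓢(E, H)) : MemLp (fun ξ => japaneseBracket ξ ^ t • f ξ) 2 := by
  simpa only [← smulLeftCLM_apply_apply (hasTemperateGrowth_japaneseBracket_rpow t) f] using
    (smulLeftCLM H (fun ξ : E => japaneseBracket ξ ^ t) f).memLp 2

variable [NormedAddCommGroup H] [InnerProductSpace ℂ H]

theorem freqNorm_schwartz_lt_top (t : ℝ) (f : 𝓢(E, H)) :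
    freqNorm t (fun ξ => ‖f ξ‖ₑ) < ∞ := by
  rw [freqNorm_enorm_eq]
  exact (memLp_japaneseBracket_rpow_smul t f).2

theorem fourier_lineDerivOp_apply (f : 𝓢(E, H)) (y ξ : E) :
    𝓕 (⇑(∂_{y} f : 𝓢(E, H))) ξ = (2 * π * Complex.I) • inner ℝ ξ y • 𝓕 (f : E → H) ξ := by
  rw [← fourier_coe, fourier_lineDerivOp_eq, smul_apply, smulLeftCLM_apply_apply (by fun_prop),
    fourier_coe]

variable [CompleteSpace H]

theorem fourierInv_fourier_apply (f : 𝓢(E, H)) (x : E) : 𝓕⁻ (𝓕 (f : E → H)) x = f x := by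
  rw [← fourier_coe, ← fourierInv_coe, FourierTransform.fourierInv_fourier_eq]

theorem fourierMul_fourier {m : E → ℂ} (hm : Integrable m) (f : 𝓢(E, H)) :
    fourierMul m (𝓕 (f : E → H)) = 𝓕 fun x => m x • f x := by
  rw [← fourier_coe, fourierMul_eq hm (𝓕 f).integrable, fourier_coe]
  simp only [fourierInv_fourier_apply]

theorem enorm_le_lintegral_enorm_fourier (f : 𝓢(E, H)) (x : E) :
    ‖f x‖ₑ ≤ ∫⁻ ξ, ‖𝓕 (f : E → H) ξ‖ₑ := by
  rw [← fourierInv_fourier_apply, Real.fourierInv_eq]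
  refine (enorm_integral_le_lintegral_enorm _).trans_eq (lintegral_congr fun ξ => ?_)
  rw [← ofReal_norm, Circle.norm_smul, ofReal_norm]

theorem freqNorm_zero_fourier (f : 𝓢(E, H)) :
    freqNorm 0 (fun ξ => ‖𝓕 (f : E → H) ξ‖ₑ) = eLpNorm f 2 volume := by
  rw [freqNorm_zero, eLpNorm_enorm, ← fourier_coe,
    ← eLpNorm_fourierInv_eq (𝓕 f).integrable ((𝓕 f).memLp 2), fourier_coe]
  exact congrArg (eLpNorm · 2 volume) (funext (fourierInv_fourier_apply f))

theorem exists_norm_le_freqNorm {t : ℝ} (h : (Module.finrank ℝ E : ℝ) / 2 < t) :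
    ∃ C : ℝ≥0, ∀ (f : 𝓢(E, H)) (x : E), ‖f x‖ₑ ≤ C * freqNorm t fun ξ => ‖𝓕 (f : E → H) ξ‖ₑ := by
  obtain ⟨C, hC⟩ := exists_lintegral_le_freqNorm h
  exact ⟨C, fun f x => (enorm_le_lintegral_enorm_fourier f x).trans
    (hC _ (continuous_fourier_of_integrable f.integrable).enorm.measurable)⟩

end SchwartzFourier

section ExponentialSchwartz

variable {E : Type*} [NormedAddCommGroup E] [NormedSpace ℝ E]

theorem contDiff_dslope_exp : ContDiff ℝ (⊤ : ℕ∞) (dslope Complex.exp 0) := by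
  have hdiff : Differentiable ℂ (dslope Complex.exp 0) := differentiableOn_univ.1 <|
    (Complex.differentiableOn_dslope Filter.univ_mem).2 Complex.differentiable_exp.differentiableOn
  exact hdiff.contDiff.restrict_scalars ℝ

/-- `e^φ - 1` is `φ` times the entire function `(eᶻ - 1) / z` of `φ`, cut off outside the range of
`φ`. -/
theorem exists_schwartz_eq_exp_sub_one (φ : 𝓢(E, ℂ)) :
    ∃ m : 𝓢(E, ℂ), ∀ x, m x = Complex.exp (φ x) - 1 := by
  obtain ⟨B, hB_pos, hB⟩ : ∃ B : ℝ, 0 < B ∧ ∀ x, ‖φ x‖ ≤ B := by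
    obtain ⟨B, hB_pos, hB⟩ := φ.decay 0 0
    exact ⟨B, hB_pos, fun x => by simpa using hB x⟩
  let χ : ContDiffBump (0 : ℂ) := ⟨B, B + 1, hB_pos, lt_add_one B⟩
  let h : ℂ → ℂ := fun z => χ z * dslope Complex.exp 0 z
  have hcontDiff : ContDiff ℝ (⊤ : ℕ∞) h :=
    (Complex.ofRealCLM.contDiff.comp χ.contDiff).mul contDiff_dslope_exp
  have hsupport : HasCompactSupport h :=
    (χ.hasCompactSupport.comp_left Complex.ofReal_zero).mul_right
  have hgrowth : Function.HasTemperateGrowth (h ∘ φ) :=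
    (hsupport.hasTemperateGrowth hcontDiff).comp φ.hasTemperateGrowth
  refine ⟨smulLeftCLM ℂ (h ∘ φ) φ, fun x => ?_⟩
  have hχ : χ (φ x) = 1 := χ.one_of_mem_closedBall (mem_closedBall_zero_iff.2 (hB x))
  have hslope := sub_smul_dslope Complex.exp 0 (φ x)
  rw [sub_zero, Complex.exp_zero, smul_eq_mul, mul_comm] at hslope
  rw [smulLeftCLM_apply_apply hgrowth, smul_eq_mul, Function.comp_apply, ← hslope]
  simp only [h, hχ, Complex.ofReal_one, one_mul]

/-- The Schwartz function `e^φ - 1`. -/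
def expSubOne (φ : 𝓢(E, ℂ)) : 𝓢(E, ℂ) := (exists_schwartz_eq_exp_sub_one φ).choose

theorem expSubOne_apply (φ : 𝓢(E, ℂ)) (x : E) : expSubOne φ x = Complex.exp (φ x) - 1 :=
  (exists_schwartz_eq_exp_sub_one φ).choose_spec x

theorem lineDerivOp_expSubOne (φ : 𝓢(E, ℂ)) (y : E) :
    ∂_{y} (expSubOne φ) =
      ∂_{y} φ + pairing (ContinuousLinearMap.mul ℝ ℂ) (∂_{y} φ) (expSubOne φ) := by
  ext x
  have hderiv : HasFDerivAt (expSubOne φ) (Complex.exp (φ x) • fderiv ℝ φ x) x := by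
    rw [show ⇑(expSubOne φ) = fun x => Complex.exp (φ x) - 1 from funext (expSubOne_apply φ)]
    exact (φ.differentiableAt.hasFDerivAt.cexp).sub_const 1
  rw [add_apply, pairing_apply_apply, ContinuousLinearMap.mul_apply',
    lineDerivOp_apply_eq_fderiv, lineDerivOp_apply_eq_fderiv, hderiv.fderiv, expSubOne_apply,
    smul_apply, smul_eq_mul]
  ring

end ExponentialSchwartz

section ExponentialSobolev

variable {E : Type*} [NormedAddCommGroup E] [InnerProductSpace ℝ E] [FiniteDimensional ℝ E]
  [MeasurableSpace E] [BorelSpace E]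

theorem sobolevWeight_mul_le_of_enorm_mul_le {t ε : ℝ} (ht : 1 ≤ t) (hε : ε ≤ 1)
    {f g : E → ℝ≥0∞} (hf : Measurable f) (hg : Measurable g)
    (h : ∀ ξ, ‖ξ‖ₑ * g ξ ≤ ‖ξ‖ₑ * f ξ + ∫⁻ η, ‖ξ - η‖ₑ * f (ξ - η) * g η) (ξ : E) :
    sobolevWeight t ξ * g ξ ≤ sobolevWeight (t - ε) ξ * g ξ + sobolevWeight t ξ * f ξ +
      ENNReal.ofReal (2 ^ (t - 1)) * ((sobolevWeight t * f) ⋆ₗ g +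
        (sobolevWeight ε * f) ⋆ₗ (sobolevWeight (t - ε) * g) : E → ℝ≥0∞) ξ := by
  have hconv : sobolevWeight (t - 1) ξ * ∫⁻ η, ‖ξ - η‖ₑ * f (ξ - η) * g η ≤
      ENNReal.ofReal (2 ^ (t - 1)) * ((sobolevWeight t * f) ⋆ₗ g +
        (sobolevWeight ε * f) ⋆ₗ (sobolevWeight (t - ε) * g) : E → ℝ≥0∞) ξ := by
    simp only [Pi.add_apply, Pi.mul_apply, lconvolution_apply_sub]
    rw [← lintegral_add_left (by fun_prop), ← lintegral_const_mul _ (by fun_prop),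
      ← lintegral_const_mul _ (by fun_prop)]
    refine lintegral_mono fun η => ?_
    calc _ = ‖ξ - η‖ₑ * sobolevWeight (t - 1) ξ * (f (ξ - η) * g η) := by ring
      _ ≤ _ := by
        grw [enorm_sub_mul_sobolevWeight_le ht hε ξ η]
        exact le_of_eq (by ring)
  calc sobolevWeight t ξ * g ξ
      ≤ (sobolevWeight (t - ε) ξ + ‖ξ‖ₑ * sobolevWeight (t - 1) ξ) * g ξ := by
        grw [sobolevWeight_le_add hε ξ]
    _ = sobolevWeight (t - ε) ξ * g ξ + sobolevWeight (t - 1) ξ * (‖ξ‖ₑ * g ξ) := by ring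
    _ ≤ sobolevWeight (t - ε) ξ * g ξ + sobolevWeight (t - 1) ξ *
        (‖ξ‖ₑ * f ξ + ∫⁻ η, ‖ξ - η‖ₑ * f (ξ - η) * g η) := by grw [h ξ]
    _ = sobolevWeight (t - ε) ξ * g ξ + ‖ξ‖ₑ * sobolevWeight (t - 1) ξ * f ξ +
        sobolevWeight (t - 1) ξ * ∫⁻ η, ‖ξ - η‖ₑ * f (ξ - η) * g η := by ring
    _ ≤ _ := by grw [hconv, enorm_mul_sobolevWeight_sub_one_le t ξ]

/-- The hypothesis on `f` and `g` is the Fourier side of `|∇u| ≤ |∇φ| (1 + |u|)`. -/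
theorem exists_freqNorm_le_of_enorm_mul_le {t ε : ℝ} (ht : 1 ≤ t) (hε : ε ≤ 1)
    (hdim : (Module.finrank ℝ E : ℝ) / 2 < t - ε) :
    ∃ C : ℝ≥0, ∀ f g : E → ℝ≥0∞, Measurable f → Measurable g →
      (∀ ξ, ‖ξ‖ₑ * g ξ ≤ ‖ξ‖ₑ * f ξ + ∫⁻ η, ‖ξ - η‖ₑ * f (ξ - η) * g η) →
      freqNorm t g ≤ freqNorm (t - ε) g + freqNorm t f + C * freqNorm t f * freqNorm (t - ε) g := by
  obtain ⟨C, hC⟩ := exists_eLpNorm_lconvolution_add_le hdim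
  refine ⟨((2 : ℝ) ^ (t - 1)).toNNReal * C, fun f g hf hg h => ?_⟩
  calc freqNorm t g ≤ 1 * eLpNorm (sobolevWeight (t - ε) * g + sobolevWeight t * f) 2 volume +
        ENNReal.ofReal (2 ^ (t - 1)) * eLpNorm ((sobolevWeight t * f) ⋆ₗ g +
          (sobolevWeight ε * f) ⋆ₗ (sobolevWeight (t - ε) * g)) 2 volume :=
        eLpNorm_le_mul_add_mul one_le_two (by fun_prop) (by fun_prop) fun ξ => by
          rw [one_mul]
          exact sobolevWeight_mul_le_of_enorm_mul_le ht hε hf hg h ξ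
    _ ≤ freqNorm (t - ε) g + freqNorm t f +
        ENNReal.ofReal (2 ^ (t - 1)) * (C * freqNorm t f * freqNorm (t - ε) g) := by
        rw [one_mul]
        gcongr
        · exact eLpNorm_add_le (by fun_prop) (by fun_prop) one_le_two
        · exact hC f g hf hg
    _ = _ := by
        rw [ENNReal.ofReal]
        push_cast
        ring

theorem norm_sq_smul_fourier_expSubOne (φ : 𝓢(E, ℂ)) (ξ : E) :
    (‖ξ‖ ^ 2) • 𝓕 (expSubOne φ : E → ℂ) ξ = (‖ξ‖ ^ 2) • 𝓕 (φ : E → ℂ) ξ +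
      ∫ η, inner ℝ (ξ - η) ξ • (𝓕 (φ : E → ℂ) (ξ - η) * 𝓕 (expSubOne φ : E → ℂ) η) := by
  set D : 𝓢(E, ℂ) := ∂_{ξ} φ
  have hD (ζ : E) : 𝓕 (D : E → ℂ) ζ = (2 * π * Complex.I) • inner ℝ ζ ξ • 𝓕 (φ : E → ℂ) ζ :=
    fourier_lineDerivOp_apply φ ξ ζ
  have hproduct : 𝓕 (pairing (ContinuousLinearMap.mul ℝ ℂ) D (expSubOne φ) : E → ℂ) ξ =
      (2 * π * Complex.I) •
        ∫ η, inner ℝ (ξ - η) ξ • (𝓕 (φ : E → ℂ) (ξ - η) * 𝓕 (expSubOne φ : E → ℂ) η) := by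
    refine (congrFun (fourierMul_fourier D.integrable (expSubOne φ)) ξ).symm.trans ?_
    rw [fourierMul, ← integral_smul]
    simp only [hD, smul_eq_mul, mul_assoc, smul_mul_assoc]
  have hfourier : 𝓕 (∂_{ξ} (expSubOne φ)) ξ =
      𝓕 D ξ + 𝓕 (pairing (ContinuousLinearMap.mul ℝ ℂ) D (expSubOne φ)) ξ := by
    rw [lineDerivOp_expSubOne, FourierTransform.fourier_add, add_apply]
  rw [fourier_coe, fourier_coe, fourier_coe, fourier_lineDerivOp_apply, hD, hproduct, ← smul_add,
    real_inner_self_eq_norm_sq] at hfourier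
  exact smul_right_injective ℂ Complex.two_pi_I_ne_zero hfourier

theorem enorm_mul_enorm_fourier_expSubOne_le (φ : 𝓢(E, ℂ)) (ξ : E) :
    ‖ξ‖ₑ * ‖𝓕 (expSubOne φ : E → ℂ) ξ‖ₑ ≤ ‖ξ‖ₑ * ‖𝓕 (φ : E → ℂ) ξ‖ₑ +
      ∫⁻ η, ‖ξ - η‖ₑ * ‖𝓕 (φ : E → ℂ) (ξ - η)‖ₑ * ‖𝓕 (expSubOne φ : E → ℂ) η‖ₑ := by
  rcases eq_or_ne ξ 0 with rfl | hξ
  · simp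
  have hsq (z : ℂ) : ‖(‖ξ‖ ^ 2) • z‖ₑ = ‖ξ‖ₑ * (‖ξ‖ₑ * ‖z‖ₑ) := by
    rw [enorm_smul, enorm_pow, enorm_norm, sq, mul_assoc]
  have hint : ‖∫ η, inner ℝ (ξ - η) ξ • (𝓕 (φ : E → ℂ) (ξ - η) * 𝓕 (expSubOne φ : E → ℂ) η)‖ₑ ≤
      ‖ξ‖ₑ * ∫⁻ η, ‖ξ - η‖ₑ * ‖𝓕 (φ : E → ℂ) (ξ - η)‖ₑ * ‖𝓕 (expSubOne φ : E → ℂ) η‖ₑ := by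
    rw [← lintegral_const_mul' _ _ enorm_ne_top]
    refine (enorm_integral_le_lintegral_enorm _).trans (lintegral_mono fun η => ?_)
    have hinner : ‖inner ℝ (ξ - η) ξ‖ₑ ≤ ‖ξ - η‖ₑ * ‖ξ‖ₑ := by
      simp only [← ofReal_norm, ← ENNReal.ofReal_mul (norm_nonneg _)]
      exact ENNReal.ofReal_le_ofReal (norm_inner_le_norm _ _)
    rw [enorm_smul, enorm_mul]
    grw [hinner]
    exact le_of_eq (by ring)
  rw [← ENNReal.mul_le_mul_iff_right (enorm_ne_zero.2 hξ) enorm_ne_top, mul_add, ← hsq, ← hsq,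
    norm_sq_smul_fourier_expSubOne]
  exact (enorm_add_le _ _).trans (by gcongr)

theorem freqNorm_zero_fourier_expSubOne_le {φ : 𝓢(E, ℂ)} {B : ℝ} (hB : ∀ x, ‖φ x‖ ≤ B) :
    freqNorm 0 (fun ξ => ‖𝓕 (expSubOne φ : E → ℂ) ξ‖ₑ) ≤
      ENNReal.ofReal (Real.exp B) * freqNorm 0 fun ξ => ‖𝓕 (φ : E → ℂ) ξ‖ₑ := by
  rw [freqNorm_zero_fourier, freqNorm_zero_fourier]
  refine eLpNorm_le_mul_eLpNorm_of_ae_le_mul (.of_forall fun x => ?_) 2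
  have hexp := Complex.norm_exp_sub_sum_le_norm_mul_exp (φ x) 1
  simp only [Finset.sum_range_one, pow_zero, Nat.factorial_zero, Nat.cast_one, div_one,
    pow_one] at hexp
  rw [expSubOne_apply]
  refine hexp.trans ?_
  rw [mul_comm]
  gcongr
  exact hB x

theorem exists_freqNorm_fourier_expSubOne_le {s : ℝ} (hs1 : 1 ≤ s)
    (hs : (Module.finrank ℝ E : ℝ) / 2 < s) (a : ℝ≥0) :
    ∃ K : ℝ≥0, ∀ φ : 𝓢(E, ℂ), freqNorm s (fun ξ => ‖𝓕 (φ : E → ℂ) ξ‖ₑ) ≤ a →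
      freqNorm s (fun ξ => ‖𝓕 (expSubOne φ : E → ℂ) ξ‖ₑ) ≤ K := by
  obtain ⟨ε, hε0, hε⟩ : ∃ ε : ℝ, 0 < ε ∧ ε < min 1 (s - Module.finrank ℝ E / 2) :=
    exists_between (lt_min one_pos (sub_pos.2 hs))
  obtain ⟨hε1, hεs⟩ := lt_min_iff.1 hε
  obtain ⟨B, hB⟩ := exists_norm_le_freqNorm (H := ℂ) hs
  obtain ⟨C, hC⟩ := exists_freqNorm_le_of_enorm_mul_le hs1 hε1.le (lt_sub_comm.1 hεs)
  obtain ⟨D, hD⟩ := exists_freqNorm_le_of_le_freqNorm_sub (E := E) hε0 (hε1.le.trans hs1)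
    (1 + C * a)
  set M : ℝ≥0 := (Real.exp (B * a)).toNNReal
  refine ⟨D * (M * a) + 2 * a, fun φ ha => ?_⟩
  have hmeas (f : 𝓢(E, ℂ)) : Measurable fun ξ => ‖𝓕 (f : E → ℂ) ξ‖ₑ :=
    (continuous_fourier_of_integrable f.integrable).enorm.measurable
  have hsup (x : E) : ‖φ x‖ ≤ B * a := by
    have : ‖φ x‖ₑ ≤ ↑(B * a) := (hB φ x).trans (by push_cast; gcongr)
    exact_mod_cast this
  have hzero : freqNorm 0 (fun ξ => ‖𝓕 (expSubOne φ : E → ℂ) ξ‖ₑ) ≤ M * a :=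
    (freqNorm_zero_fourier_expSubOne_le hsup).trans
      (by gcongr; exacts [le_rfl, (freqNorm_mono_exponent (by linarith) _).trans ha])
  refine (hD _ a (hmeas _) ?_ ?_).trans ?_
  · rw [← fourier_coe]
    exact freqNorm_schwartz_lt_top s _
  · refine (hC _ _ (hmeas φ) (hmeas _) (enorm_mul_enorm_fourier_expSubOne_le φ)).trans ?_
    grw [ha]
    push_cast
    exact le_of_eq (by ring)
  · push_cast
    gcongr

theorem exists_freqNorm_add_one_fourier_expSubOne_le {s : ℝ} (hs1 : 1 ≤ s)
    (hs : (Module.finrank ℝ E : ℝ) / 2 < s) (a : ℝ≥0) :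
    ∃ K : ℝ≥0, ∀ φ : 𝓢(E, ℂ), freqNorm s (fun ξ => ‖𝓕 (φ : E → ℂ) ξ‖ₑ) ≤ a →
      freqNorm (s + 1) (fun ξ => ‖𝓕 (expSubOne φ : E → ℂ) ξ‖ₑ) ≤
        K * (1 + freqNorm (s + 1) fun ξ => ‖𝓕 (φ : E → ℂ) ξ‖ₑ) := by
  obtain ⟨C, hC⟩ := exists_freqNorm_le_of_enorm_mul_le (E := E) (t := s + 1) (ε := 1) (by linarith)
    le_rfl (by linarith)
  obtain ⟨K, hK⟩ := exists_freqNorm_fourier_expSubOne_le hs1 hs a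
  refine ⟨1 + K + C * K, fun φ ha => ?_⟩
  have hmeas (f : 𝓢(E, ℂ)) : Measurable fun ξ => ‖𝓕 (f : E → ℂ) ξ‖ₑ :=
    (continuous_fourier_of_integrable f.integrable).enorm.measurable
  have hbound := hC _ _ (hmeas φ) (hmeas _) (enorm_mul_enorm_fourier_expSubOne_le φ)
  rw [add_sub_cancel_right] at hbound
  set P := freqNorm (s + 1) fun ξ => ‖𝓕 (φ : E → ℂ) ξ‖ₑ
  calc _ ≤ K + P + C * P * K := by
        grw [hbound, hK φ ha]
    _ ≤ K + P + C * P * K + (1 + K * P + C * K) := le_self_add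
    _ = _ := by push_cast; ring

end ExponentialSobolev

section GradientPart

variable {d : ℕ}

theorem two_mul_sum_sq_mul_sum_sq {ι R : Type*} [Fintype ι] [CommRing R] (x a : ι → R) :
    2 * ((∑ i, x i ^ 2) * ∑ i, a i ^ 2) =
      2 * (∑ i, x i * a i) ^ 2 + ∑ i, ∑ j, (x i * a j - x j * a i) ^ 2 := by
  have hexpand (i j : ι) : (x i * a j - x j * a i) ^ 2 =
      x i ^ 2 * a j ^ 2 + a i ^ 2 * x j ^ 2 - 2 * ((x i * a i) * (x j * a j)) := by ring
  simp only [hexpand, Finset.sum_add_distrib, Finset.sum_sub_distrib, ← Finset.mul_sum,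
    ← Finset.sum_mul]
  ring

theorem two_mul_norm_sq_mul_norm_sq (ξ : Euc d) (w : EuclideanSpace ℂ (Fin d)) :
    2 * (‖ξ‖ ^ 2 * ‖w‖ ^ 2) = 2 * ‖∑ i, (ξ i : ℂ) * w i‖ ^ 2 +
      ∑ i, ∑ j, ‖(ξ i : ℂ) * w j - ξ j * w i‖ ^ 2 := by
  have hre := two_mul_sum_sq_mul_sum_sq ξ.ofLp fun i => (w i).re
  have him := two_mul_sum_sq_mul_sum_sq ξ.ofLp fun i => (w i).im
  simp only [EuclideanSpace.norm_sq_eq, Real.norm_eq_abs, sq_abs, Complex.sq_norm,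
    Complex.normSq_apply, ← sq, Complex.re_sum, Complex.im_sum, Complex.re_ofReal_mul,
    Complex.im_ofReal_mul, Complex.sub_re, Complex.sub_im, Finset.sum_add_distrib]
  linear_combination hre + him

/-- The real frequency `ξ` as a vector of `ℂᵈ`, so that it can be paired with complex amplitudes. -/
def complexify (ξ : Euc d) : EuclideanSpace ℂ (Fin d) := WithLp.toLp 2 fun i => (ξ i : ℂ)

theorem inner_complexify (ξ : Euc d) (w : EuclideanSpace ℂ (Fin d)) :
    inner ℂ (complexify ξ) w = ∑ i, (ξ i : ℂ) * w i := by
  simp [complexify, PiLp.inner_apply, mul_comm]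

theorem continuous_complexify : Continuous (complexify : Euc d → EuclideanSpace ℂ (Fin d)) := by
  unfold complexify
  fun_prop

/-- The amplitude at frequency `ξ` of the curl-free part of a field with amplitude `w`: the
component of `w` along `ξ`. -/
def gradientPart (ξ : Euc d) (w : EuclideanSpace ℂ (Fin d)) : EuclideanSpace ℂ (Fin d) :=
  (ℂ ∙ complexify ξ).starProjection w

theorem norm_gradientPart_le (ξ : Euc d) (w : EuclideanSpace ℂ (Fin d)) :
    ‖gradientPart ξ w‖ ≤ ‖w‖ :=
  Submodule.norm_starProjection_apply_le _ w

theorem inner_gradientPart_sub (ξ : Euc d) (w : EuclideanSpace ℂ (Fin d)) :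
    inner ℂ (gradientPart ξ w) (w - gradientPart ξ w) = 0 :=
  (Submodule.mem_orthogonal _ _).1 (Submodule.sub_starProjection_mem_orthogonal w) _
    (Submodule.starProjection_apply_mem _ w)

theorem sum_mul_gradientPart (ξ : Euc d) (w : EuclideanSpace ℂ (Fin d)) :
    ∑ i, (ξ i : ℂ) * gradientPart ξ w i = ∑ i, (ξ i : ℂ) * w i := by
  rw [← inner_complexify, ← inner_complexify, eq_comm, ← sub_eq_zero, ← inner_sub_right]
  exact (Submodule.mem_orthogonal _ _).1 (Submodule.sub_starProjection_mem_orthogonal w) _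
    (Submodule.mem_span_singleton_self _)

theorem mul_gradientPart_sub_mul_gradientPart (ξ : Euc d) (w : EuclideanSpace ℂ (Fin d))
    (i j : Fin d) : (ξ i : ℂ) * gradientPart ξ w j - ξ j * gradientPart ξ w i = 0 := by
  obtain ⟨c, hc⟩ := Submodule.mem_span_singleton.1
    (Submodule.starProjection_apply_mem (ℂ ∙ complexify ξ) w)
  rw [gradientPart, ← hc]
  simp only [complexify, PiLp.smul_apply, smul_eq_mul]
  ring

theorem measurable_gradientPart {Y : Euc d → EuclideanSpace ℂ (Fin d)} (hY : Continuous Y) :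
    Measurable fun ξ => gradientPart ξ (Y ξ) := by
  simp only [gradientPart, Submodule.starProjection_singleton]
  have hc := continuous_complexify (d := d)
  exact ((hc.inner hY).measurable.div
    (Complex.continuous_ofReal.comp (hc.norm.pow 2)).measurable).smul hc.measurable

theorem two_mul_norm_sq_mul_norm_add_gradientPart_sq (ξ : Euc d)
    (w y : EuclideanSpace ℂ (Fin d)) : 2 * (‖ξ‖ ^ 2 * ‖w + gradientPart ξ y‖ ^ 2) =
      2 * ‖∑ i, (ξ i : ℂ) * (w + y) i‖ ^ 2 + ∑ i, ∑ j, ‖(ξ i : ℂ) * w j - ξ j * w i‖ ^ 2 := by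
  rw [two_mul_norm_sq_mul_norm_sq]
  simp only [PiLp.add_apply, mul_add, Finset.sum_add_distrib, sum_mul_gradientPart]
  simp only [add_sub_add_comm, mul_gradientPart_sub_mul_gradientPart, add_zero]

end GradientPart

section VectorFields

variable {d : ℕ}

/-- The vector field with the given components. -/
def vectorField (v : Fin d → 𝓢(Euc d, ℂ)) : 𝓢(Euc d, EuclideanSpace ℂ (Fin d)) :=
  ∑ j, (v j).postcompCLM
    ((ContinuousLinearMap.toSpanSingleton ℂ (EuclideanSpace.single j (1 : ℂ))).restrictScalars ℝ)

theorem vectorField_apply (v : Fin d → 𝓢(Euc d, ℂ)) (x : Euc d) (j : Fin d) :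
    vectorField v x j = v j x := by
  simp [vectorField, sum_apply, postcompCLM_apply, Pi.single_apply]

theorem fourier_apply_coord {f : Euc d → EuclideanSpace ℂ (Fin d)} (hf : Integrable f) (ξ : Euc d)
    (j : Fin d) : 𝓕 f ξ j = 𝓕 (fun x => f x j) ξ := by
  have hcomm := (EuclideanSpace.proj (𝕜 := ℂ) j :
    EuclideanSpace ℂ (Fin d) →L[ℂ] ℂ).integral_comp_comm
      ((Real.fourierIntegral_convergent_iff ξ).2 hf)
  rw [Real.fourier_eq, Real.fourier_eq]
  exact hcomm.symm

theorem integrable_weighted_gradientPart (t : ℝ) (Y : 𝓢(Euc d, EuclideanSpace ℂ (Fin d))) :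
    Integrable (fun ξ => japaneseBracket ξ ^ t • gradientPart ξ (Y ξ)) ∧
      MemLp (fun ξ => japaneseBracket ξ ^ t • gradientPart ξ (Y ξ)) 2 := by
  have hmeas : AEStronglyMeasurable fun ξ => japaneseBracket ξ ^ t • gradientPart ξ (Y ξ) :=
    ((continuous_japaneseBracket.measurable.pow_const t).smul
      (measurable_gradientPart Y.continuous)).aestronglyMeasurable
  have hle (ξ : Euc d) :
      ‖japaneseBracket ξ ^ t • gradientPart ξ (Y ξ)‖ ≤ ‖japaneseBracket ξ ^ t • Y ξ‖ := by
    rw [norm_smul, norm_smul]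
    gcongr
    exact norm_gradientPart_le _ _
  exact ⟨(integrable_japaneseBracket_rpow_smul t Y).mono hmeas (.of_forall hle),
    (memLp_japaneseBracket_rpow_smul t Y).mono hmeas (.of_forall hle)⟩

theorem isEllipticCorrection_neg_gradientPart {b : ℝ≥0} (hb : b ≠ 0) {m : 𝓢(Euc d, ℂ)}
    (hm : ∀ x, b ≤ 1 + (m x).re) (V : 𝓢(Euc d, EuclideanSpace ℂ (Fin d))) :
    IsEllipticCorrection m b (fun ξ => -gradientPart ξ (fourierMul m (𝓕 ⇑V) ξ))
      (fun ξ => 𝓕 ⇑V ξ + gradientPart ξ (fourierMul m (𝓕 ⇑V) ξ)) := by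
  set VF : 𝓢(Euc d, EuclideanSpace ℂ (Fin d)) := 𝓕 V
  set MV : 𝓢(Euc d, EuclideanSpace ℂ (Fin d)) := 𝓕 (smulLeftCLM _ (m : Euc d → ℂ) V)
  have hVF : 𝓕 ⇑V = VF := (fourier_coe V).symm
  have hMV : fourierMul m VF = MV := by
    rw [← hVF, fourierMul_fourier m.integrable, fourier_coe]
    congr with x
    rw [smulLeftCLM_apply_apply m.hasTemperateGrowth]
  rw [hVF, hMV]
  have hmeas := measurable_gradientPart MV.continuous
  have hweighted (t : ℝ) := integrable_weighted_gradientPart t MV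
  have hint : Integrable fun ξ => gradientPart ξ (MV ξ) := by
    simpa only [Real.rpow_zero, one_smul] using (hweighted 0).1
  refine ⟨m.integrable, hb, hm, hmeas.neg.stronglyMeasurable,
    (VF.continuous.measurable.add hmeas).stronglyMeasurable, fun t => ?_, fun t => ?_,
    VF.integrable.add hint, fun ξ => ?_⟩
  · simp only [smul_neg]
    exact (hweighted t).1.neg
  · simp only [smul_neg]
    exact (hweighted t).2.neg
  · have hadd : ((fun ξ => -gradientPart ξ (MV ξ)) +
        fun ξ => VF ξ + gradientPart ξ (MV ξ)) = VF := by
      ext1 η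
      simp
    rw [hadd, hMV, neg_add_eq_sub, inner_neg_left, inner_gradientPart_sub, neg_zero]

end VectorFields

section WeightedFields

variable {E H : Type*} [NormedAddCommGroup E] [InnerProductSpace ℝ E] [NormedAddCommGroup H]
  [InnerProductSpace ℂ H]

/-- The Schwartz function `e^φ f`. -/
def expMul (φ : 𝓢(E, ℂ)) (f : 𝓢(E, H)) : 𝓢(E, H) := f + smulLeftCLM H (expSubOne φ : E → ℂ) f

theorem expMul_apply (φ : 𝓢(E, ℂ)) (f : 𝓢(E, H)) (x : E) :
    expMul φ f x = Complex.exp (φ x) • f x := by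
  rw [expMul, add_apply, smulLeftCLM_apply_apply (expSubOne φ).hasTemperateGrowth, expSubOne_apply]
  module

theorem exp_neg_le_one_add_re_expSubOne {φ : 𝓢(E, ℂ)} {B : ℝ} (hB : ∀ x, ‖φ x‖ ≤ B)
    (hφ : ∀ x, (φ x).im = 0) (x : E) : Real.exp (-B) ≤ 1 + (expSubOne φ x).re := by
  rw [expSubOne_apply, Complex.sub_re, Complex.exp_re, hφ, Real.cos_zero, mul_one, Complex.one_re,
    add_sub_cancel, Real.exp_le_exp]
  exact neg_le_of_abs_le ((Complex.abs_re_le_norm _).trans (hB x))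

variable [FiniteDimensional ℝ E] [MeasurableSpace E] [BorelSpace E] [CompleteSpace H]

theorem fourier_expMul (φ : 𝓢(E, ℂ)) (f : 𝓢(E, H)) :
    𝓕 (expMul φ f : E → H) = 𝓕 ⇑f + fourierMul (expSubOne φ) (𝓕 ⇑f) := by
  rw [fourierMul_fourier (expSubOne φ).integrable, ← fourier_coe, expMul,
    FourierTransform.fourier_add, ← fourier_coe]
  have hmul : ⇑(smulLeftCLM H (expSubOne φ : E → ℂ) f) = fun x => expSubOne φ x • f x :=
    funext fun x => smulLeftCLM_apply_apply (expSubOne φ).hasTemperateGrowth f x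
  rw [← hmul, ← fourier_coe]
  rfl

end WeightedFields

section GradientEstimate

variable {d : ℕ}

theorem freqNorm_enorm_mul_add_le (s : ℝ) {Z W : Euc d → EuclideanSpace ℂ (Fin d)}
    (hZ : StronglyMeasurable Z) (hW : StronglyMeasurable W) :
    freqNorm s (fun ξ => ‖ξ‖ₑ * ‖Z ξ + W ξ‖ₑ) ≤
      freqNorm (s + 1) (fun ξ => ‖Z ξ‖ₑ) + freqNorm s fun ξ => ‖ξ‖ₑ * ‖W ξ‖ₑ := by
  have := hZ.enorm
  have := hW.enorm
  refine (eLpNorm_mono_enorm fun ξ => ?_).trans (eLpNorm_add_le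
    (f := sobolevWeight (s + 1) * fun ξ => ‖Z ξ‖ₑ)
    (g := sobolevWeight s * fun ξ => ‖ξ‖ₑ * ‖W ξ‖ₑ) (by fun_prop) (by fun_prop) one_le_two)
  simp only [enorm_eq_self, Pi.add_apply, Pi.mul_apply]
  calc _ ≤ sobolevWeight s ξ * (‖ξ‖ₑ * (‖Z ξ‖ₑ + ‖W ξ‖ₑ)) := by
        gcongr
        exact enorm_add_le _ _
    _ = ‖ξ‖ₑ * sobolevWeight (s + 1 - 1) ξ * ‖Z ξ‖ₑ + sobolevWeight s ξ * (‖ξ‖ₑ * ‖W ξ‖ₑ) := by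
        rw [add_sub_cancel_right]
        ring
    _ ≤ _ := by
        gcongr
        exact enorm_mul_sobolevWeight_sub_one_le _ ξ

theorem exists_norm_le_of_freqNorm_le {s : ℝ} (hs : (d : ℝ) / 2 < s) (a : ℝ≥0) :
    ∃ B : ℝ, ∀ φ : 𝓢(Euc d, ℂ), freqNorm s (fun ξ => ‖𝓕 (φ : Euc d → ℂ) ξ‖ₑ) ≤ a →
      ∀ x, ‖φ x‖ ≤ B := by
  obtain ⟨C, hC⟩ := exists_norm_le_freqNorm (E := Euc d) (H := ℂ) (by simpa using hs)
  refine ⟨(C * a : ℝ≥0), fun φ hφ x => ?_⟩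
  have hle : ‖φ x‖ₑ ≤ (C * a : ℝ≥0) := (hC φ x).trans (by push_cast; gcongr)
  exact NNReal.coe_le_coe.2 (ENNReal.coe_le_coe.1 hle)

theorem exists_freqNorm_enorm_mul_fourier_le {s : ℝ} (hd : 3 ≤ d) (hs : (d : ℝ) / 2 < s)
    (a : ℝ≥0) : ∃ K : ℝ≥0, ∀ (φ : 𝓢(Euc d, ℂ)) (V : 𝓢(Euc d, EuclideanSpace ℂ (Fin d))),
      (∀ x, (φ x).im = 0) → freqNorm s (fun ξ => ‖𝓕 (φ : Euc d → ℂ) ξ‖ₑ) ≤ a →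
      freqNorm s (fun ξ => ‖ξ‖ₑ * ‖𝓕 ⇑V ξ‖ₑ) ≤
        K * (1 + freqNorm (s + 1) fun ξ => ‖𝓕 (φ : Euc d → ℂ) ξ‖ₑ) * freqNorm s fun ξ =>
          ‖ξ‖ₑ * ‖𝓕 ⇑V ξ + gradientPart ξ (fourierMul (expSubOne φ) (𝓕 ⇑V) ξ)‖ₑ := by
  have hs1 : 1 ≤ s := by
    have : (3 : ℝ) ≤ d := by exact_mod_cast hd
    linarith
  have hdim : (Module.finrank ℝ (Euc d) : ℝ) / 2 < s := by simpa using hs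
  obtain ⟨B, hB⟩ := exists_norm_le_of_freqNorm_le hs a
  obtain ⟨A₀, hA₀⟩ := exists_freqNorm_fourier_expSubOne_le hs1 hdim a
  obtain ⟨A₁, hA₁⟩ := exists_freqNorm_add_one_fourier_expSubOne_le hs1 hdim a
  obtain ⟨K, hK⟩ := IsEllipticCorrection.exists_freqNorm_add_one_le
    (H := EuclideanSpace ℂ (Fin d)) (by simpa using hd) hdim A₀ (Real.exp (-B)).toNNReal
  refine ⟨K * (1 + A₁) + 1, fun φ V hreal ha => ?_⟩
  have hcorr := isEllipticCorrection_neg_gradientPart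
    (Real.toNNReal_pos.2 (Real.exp_pos (-B))).ne' (m := expSubOne φ) (fun x => by
      rw [Real.coe_toNNReal _ (Real.exp_pos _).le]
      exact exp_neg_le_one_add_re_expSubOne (hB φ ha) hreal x) V
  have hZ := hK _ _ _ hcorr (hA₀ φ ha)
  have hV := freqNorm_enorm_mul_add_le s hcorr.stronglyMeasurable_correction
    hcorr.stronglyMeasurable_source
  simp only [add_comm (-gradientPart _ _), add_neg_cancel_right] at hV
  grw [hV, hZ, hA₁ φ ha]
  set P := freqNorm (s + 1) fun ξ => ‖𝓕 (φ : Euc d → ℂ) ξ‖ₑ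
  set N := freqNorm s fun ξ =>
    ‖ξ‖ₑ * ‖𝓕 ⇑V ξ + gradientPart ξ (fourierMul (expSubOne φ) (𝓕 ⇑V) ξ)‖ₑ
  calc _ ≤ K * ((1 + P) + A₁ * (1 + P)) * N + (1 + P) * N := by
        gcongr
        · exact le_self_add
        · exact le_mul_of_one_le_left zero_le le_self_add
    _ = _ := by push_cast; ring

end GradientEstimate

section SobolevNorms

variable {d : ℕ}

theorem hNormSq_nonneg (s : ℝ) (u : Euc d → ℂ) : 0 ≤ hNormSq d s u := by
  unfold hNormSq
  positivity

theorem freqNorm_fourier_sq (s : ℝ) (f : 𝓢(Euc d, ℂ)) :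
    freqNorm s (fun ξ => ‖𝓕 (f : Euc d → ℂ) ξ‖ₑ) ^ 2 = ENNReal.ofReal (hNormSq d s f) := by
  have hpt (ξ : Euc d) : ENNReal.ofReal ((1 + ‖ξ‖ ^ 2) ^ s) * ‖𝓕 (f : Euc d → ℂ) ξ‖ₑ ^ 2 =
      ENNReal.ofReal ((1 + ‖ξ‖ ^ 2) ^ s * ‖𝓕 (f : Euc d → ℂ) ξ‖ ^ 2) := by
    rw [ENNReal.ofReal_mul (by positivity), ENNReal.ofReal_pow (norm_nonneg _), ofReal_norm]
  have hint : Integrable fun ξ : Euc d => (1 + ‖ξ‖ ^ 2) ^ s * ‖𝓕 (f : Euc d → ℂ) ξ‖ ^ 2 := by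
    refine (memLp_japaneseBracket_rpow_smul s (𝓕 f)).integrable_norm_pow two_ne_zero |>.congr
      (.of_forall fun ξ => ?_)
    beta_reduce
    rw [norm_smul, mul_pow, Real.norm_eq_abs, sq_abs, ← Real.rpow_mul_natCast
      (japaneseBracket_pos ξ).le, mul_comm s, Real.rpow_natCast_mul (japaneseBracket_pos ξ).le,
      japaneseBracket_sq, fourier_coe]
  rw [freqNorm_sq, hNormSq, ofReal_integral_eq_lintegral_ofReal hint
    (.of_forall fun ξ => by positivity)]
  exact lintegral_congr hpt

theorem freqNorm_fourier (s : ℝ) (f : 𝓢(Euc d, ℂ)) :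
    freqNorm s (fun ξ => ‖𝓕 (f : Euc d → ℂ) ξ‖ₑ) = ENNReal.ofReal (hNorm d s f) := by
  refine (ENNReal.pow_right_strictMono two_ne_zero).injective ?_
  beta_reduce
  rw [freqNorm_fourier_sq, hNorm, ← ENNReal.ofReal_pow (Real.sqrt_nonneg _),
    Real.sq_sqrt (hNormSq_nonneg s f)]

theorem lintegral_mul_sum_enorm_fourier_sq {ι : Type*} [Fintype ι] (s : ℝ)
    (f : ι → 𝓢(Euc d, ℂ)) :
    ∫⁻ ξ, ENNReal.ofReal ((1 + ‖ξ‖ ^ 2) ^ s) * ∑ i, ‖𝓕 (f i : Euc d → ℂ) ξ‖ₑ ^ 2 =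
      ENNReal.ofReal (∑ i, hNormSq d s (f i)) := by
  have hmeas (i : ι) : Measurable fun ξ => ‖𝓕 (f i : Euc d → ℂ) ξ‖ₑ :=
    (continuous_fourier_of_integrable (f i).integrable).enorm.measurable
  simp only [Finset.mul_sum]
  rw [lintegral_finsetSum _ fun i _ => by fun_prop,
    ENNReal.ofReal_sum_of_nonneg fun i _ => hNormSq_nonneg s _]
  exact Finset.sum_congr rfl fun i _ => by rw [← freqNorm_sq, freqNorm_fourier_sq]

theorem pd_eq_lineDerivOp (i : Fin d) (f : 𝓢(Euc d, ℂ)) :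
    pd d i f = ⇑(∂_{EuclideanSpace.single i (1 : ℝ)} f : 𝓢(Euc d, ℂ)) := rfl

theorem fourier_pd (i : Fin d) (f : 𝓢(Euc d, ℂ)) (ξ : Euc d) :
    𝓕 (pd d i f) ξ = 2 * π * Complex.I * (ξ i * 𝓕 (f : Euc d → ℂ) ξ) := by
  rw [pd_eq_lineDerivOp, fourier_lineDerivOp_apply]
  simp [EuclideanSpace.inner_single_right]

/-- The divergence of a Schwartz vector field, as a Schwartz function. -/
def divergence (v : Fin d → 𝓢(Euc d, ℂ)) : 𝓢(Euc d, ℂ) :=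
  ∑ i, ∂_{EuclideanSpace.single i (1 : ℝ)} (v i)

theorem divergence_apply (v : Fin d → 𝓢(Euc d, ℂ)) (x : Euc d) :
    divergence v x = ∑ i, pd d i (v i) x :=
  sum_apply _ _ _

theorem fourier_divergence (v : Fin d → 𝓢(Euc d, ℂ)) (ξ : Euc d) :
    𝓕 (divergence v : Euc d → ℂ) ξ =
      2 * π * Complex.I * ∑ i, ξ i * 𝓕 (v i : Euc d → ℂ) ξ := by
  rw [Finset.mul_sum, divergence, ← fourier_coe, FourierTransform.fourier_sum, sum_apply]
  exact Finset.sum_congr rfl fun i _ => by rw [fourier_coe, ← pd_eq_lineDerivOp, fourier_pd]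

/-- The `(i, j)` entry `∂ᵢ vⱼ - ∂ⱼ vᵢ` of the curl of a Schwartz vector field. -/
def curl (v : Fin d → 𝓢(Euc d, ℂ)) (i j : Fin d) : 𝓢(Euc d, ℂ) :=
  ∂_{EuclideanSpace.single i (1 : ℝ)} (v j) - ∂_{EuclideanSpace.single j (1 : ℝ)} (v i)

theorem fourier_curl (v : Fin d → 𝓢(Euc d, ℂ)) (i j : Fin d) (ξ : Euc d) :
    𝓕 (curl v i j : Euc d → ℂ) ξ = 2 * π * Complex.I *
      (ξ i * 𝓕 (v j : Euc d → ℂ) ξ - ξ j * 𝓕 (v i : Euc d → ℂ) ξ) := by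
  have hsub (f g : 𝓢(Euc d, ℂ)) : 𝓕 (f - g) = 𝓕 f - 𝓕 g :=
    map_sub (FourierTransform.fourierCLM ℂ 𝓢(Euc d, ℂ)) f g
  rw [mul_sub, ← fourier_pd, ← fourier_pd, curl, ← fourier_coe, hsub, sub_apply, fourier_coe,
    fourier_coe, ← pd_eq_lineDerivOp, ← pd_eq_lineDerivOp]

theorem fourier_vectorField_apply (v : Fin d → 𝓢(Euc d, ℂ)) (ξ : Euc d) (j : Fin d) :
    𝓕 ⇑(vectorField v) ξ j = 𝓕 (v j : Euc d → ℂ) ξ := by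
  rw [fourier_apply_coord (vectorField v).integrable]
  simp only [vectorField_apply]

theorem expMul_vectorField (φ : 𝓢(Euc d, ℂ)) (v : Fin d → 𝓢(Euc d, ℂ)) :
    expMul φ (vectorField v) = vectorField fun i => expMul φ (v i) := by
  ext x j
  simp only [expMul_apply, vectorField_apply, PiLp.smul_apply]

theorem sum_sum_enorm_fourier_pd_sq (v : Fin d → 𝓢(Euc d, ℂ)) (ξ : Euc d) :
    ∑ i, ∑ j, ‖𝓕 (pd d i (v j)) ξ‖ₑ ^ 2 =
      (‖(2 * π * Complex.I : ℂ)‖ₑ * (‖ξ‖ₑ * ‖𝓕 ⇑(vectorField v) ξ‖ₑ)) ^ 2 := by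
  simp only [enorm_eq_nnnorm]
  norm_cast
  rw [← NNReal.coe_inj]
  push_cast [coe_nnnorm]
  simp only [fourier_pd, ← fourier_vectorField_apply, norm_mul (2 * π * Complex.I : ℂ),
    mul_pow, EuclideanSpace.norm_sq_eq, ← Finset.mul_sum, Finset.sum_mul_sum, norm_mul,
    Complex.norm_real]

theorem one_le_norm_two_pi_I : 1 ≤ ‖(2 * π * Complex.I : ℂ)‖ := by
  simp only [norm_mul, Complex.norm_two, Complex.norm_real, Complex.norm_I, mul_one,
    Real.norm_of_nonneg Real.pi_pos.le]
  linarith [Real.pi_gt_three]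

theorem norm_sq_mul_norm_fourier_add_gradientPart_sq (φ : 𝓢(Euc d, ℂ))
    (v : Fin d → 𝓢(Euc d, ℂ)) (ξ : Euc d) :
    ‖(2 * π * Complex.I : ℂ)‖ ^ 2 * (2 * (‖ξ‖ ^ 2 * ‖𝓕 ⇑(vectorField v) ξ +
      gradientPart ξ (fourierMul (expSubOne φ) (𝓕 ⇑(vectorField v)) ξ)‖ ^ 2)) =
      2 * ‖𝓕 (divergence fun i => expMul φ (v i) : Euc d → ℂ) ξ‖ ^ 2 +
        ∑ i, ∑ j, ‖𝓕 (curl v i j : Euc d → ℂ) ξ‖ ^ 2 := by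
  rw [two_mul_norm_sq_mul_norm_add_gradientPart_sq, ← Pi.add_apply (𝓕 ⇑(vectorField v)),
    ← fourier_expMul, expMul_vectorField]
  simp only [fourier_vectorField_apply, fourier_divergence, fourier_curl,
    norm_mul (2 * π * Complex.I : ℂ), mul_pow, ← Finset.mul_sum]
  ring

theorem enorm_mul_enorm_fourier_add_gradientPart_sq_le (φ : 𝓢(Euc d, ℂ))
    (v : Fin d → 𝓢(Euc d, ℂ)) (ξ : Euc d) :
    (‖ξ‖ₑ * ‖𝓕 ⇑(vectorField v) ξ +
      gradientPart ξ (fourierMul (expSubOne φ) (𝓕 ⇑(vectorField v)) ξ)‖ₑ) ^ 2 ≤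
      ‖𝓕 (divergence fun i => expMul φ (v i) : Euc d → ℂ) ξ‖ₑ ^ 2 +
        ∑ i, ∑ j, ‖𝓕 (curl v i j : Euc d → ℂ) ξ‖ₑ ^ 2 := by
  simp only [enorm_eq_nnnorm]
  norm_cast
  rw [← NNReal.coe_le_coe]
  push_cast [coe_nnnorm]
  have hcurl : 0 ≤ ∑ i, ∑ j, ‖𝓕 (curl v i j : Euc d → ℂ) ξ‖ ^ 2 := by positivity
  have hscale := le_mul_of_one_le_left (by positivity :
    0 ≤ 2 * (‖ξ‖ ^ 2 * ‖𝓕 ⇑(vectorField v) ξ +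
      gradientPart ξ (fourierMul (expSubOne φ) (𝓕 ⇑(vectorField v)) ξ)‖ ^ 2))
    (one_le_pow₀ one_le_norm_two_pi_I (n := 2))
  rw [norm_sq_mul_norm_fourier_add_gradientPart_sq] at hscale
  rw [mul_pow]
  linarith

theorem ofReal_sqrt_sum_sum_hNormSq_pd (s : ℝ) (v : Fin d → 𝓢(Euc d, ℂ)) :
    ENNReal.ofReal √(∑ i, ∑ j, hNormSq d s (pd d i (v j))) =
      ‖(2 * π * Complex.I : ℂ)‖ₑ * freqNorm s fun ξ => ‖ξ‖ₑ * ‖𝓕 ⇑(vectorField v) ξ‖ₑ := by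
  have hsum := lintegral_mul_sum_enorm_fourier_sq s fun p : Fin d × Fin d =>
    (∂_{EuclideanSpace.single p.1 (1 : ℝ)} (v p.2) : 𝓢(Euc d, ℂ))
  simp only [← pd_eq_lineDerivOp, Fintype.sum_prod_type, sum_sum_enorm_fourier_pd_sq,
    mul_pow _ (_ * _), mul_left_comm _ (_ ^ 2)] at hsum
  rw [lintegral_const_mul' _ _ (by finiteness), ← freqNorm_sq, ← mul_pow] at hsum
  refine (ENNReal.pow_right_strictMono two_ne_zero).injective ?_
  beta_reduce
  rw [hsum, ← ENNReal.ofReal_pow (Real.sqrt_nonneg _), Real.sq_sqrt]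
  exact Finset.sum_nonneg fun i _ => Finset.sum_nonneg fun j _ => hNormSq_nonneg s _

theorem freqNorm_enorm_mul_fourier_add_gradientPart_le (s : ℝ) (φ : 𝓢(Euc d, ℂ))
    (v : Fin d → 𝓢(Euc d, ℂ)) :
    freqNorm s (fun ξ => ‖ξ‖ₑ * ‖𝓕 ⇑(vectorField v) ξ +
      gradientPart ξ (fourierMul (expSubOne φ) (𝓕 ⇑(vectorField v)) ξ)‖ₑ) ≤
      ENNReal.ofReal (hNorm d s (divergence fun i => expMul φ (v i)) +
        √(∑ i, ∑ j, hNormSq d s (curl v i j))) := by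
  have hsum := lintegral_mul_sum_enorm_fourier_sq s fun p : Option (Fin d × Fin d) =>
    p.elim (divergence fun i => expMul φ (v i)) fun p => curl v p.1 p.2
  simp only [Fintype.sum_option, Option.elim, Fintype.sum_prod_type] at hsum
  have hcurl : 0 ≤ ∑ i, ∑ j, hNormSq d s (curl v i j) :=
    Finset.sum_nonneg fun i _ => Finset.sum_nonneg fun j _ => hNormSq_nonneg s _
  rw [← ENNReal.pow_le_pow_left_iff two_ne_zero, freqNorm_sq, hNorm,
    ← ENNReal.ofReal_pow (add_nonneg (Real.sqrt_nonneg _) (Real.sqrt_nonneg _))]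
  calc _ ≤ ∫⁻ ξ, ENNReal.ofReal ((1 + ‖ξ‖ ^ 2) ^ s) *
        (‖𝓕 (divergence fun i => expMul φ (v i) : Euc d → ℂ) ξ‖ₑ ^ 2 +
          ∑ i, ∑ j, ‖𝓕 (curl v i j : Euc d → ℂ) ξ‖ₑ ^ 2) := by
        gcongr with ξ
        exact enorm_mul_enorm_fourier_add_gradientPart_sq_le φ v ξ
    _ ≤ _ := by
        rw [hsum]
        gcongr
        rw [add_sq', Real.sq_sqrt (hNormSq_nonneg s _), Real.sq_sqrt hcurl]
        exact le_add_of_nonneg_right (by positivity)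

end SobolevNorms

theorem exists_sqrt_sum_sum_hNormSq_pd_le {d : ℕ} (hd : 3 ≤ d) {s : ℝ} (hs : (d : ℝ) / 2 < s)
    (a : ℝ) : ∃ K : ℝ, ∀ (φ : 𝓢(Euc d, ℂ)) (v : Fin d → 𝓢(Euc d, ℂ)),
      (∀ x, (φ x).im = 0) → hNorm d s φ ≤ a →
      √(∑ i, ∑ j, hNormSq d s (pd d i (v j))) ≤ (1 + hNorm d (s + 1) φ) * K *
        (hNorm d s (divergence fun i => expMul φ (v i)) +
          √(∑ i, ∑ j, hNormSq d s (curl v i j))) := by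
  obtain ⟨K, hK⟩ := exists_freqNorm_enorm_mul_fourier_le hd hs a.toNNReal
  refine ⟨‖(2 * π * Complex.I : ℂ)‖ * K, fun φ v hreal ha => ?_⟩
  have hP : 0 ≤ hNorm d (s + 1) φ := Real.sqrt_nonneg _
  have hgrad := hK φ (vectorField v) hreal
    (by rw [freqNorm_fourier]; exact ENNReal.ofReal_le_ofReal ha)
  grw [freqNorm_enorm_mul_fourier_add_gradientPart_le, freqNorm_fourier] at hgrad
  set N := hNorm d s (divergence fun i => expMul φ (v i)) + √(∑ i, ∑ j, hNormSq d s (curl v i j))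
  have hN : 0 ≤ N := add_nonneg (Real.sqrt_nonneg _) (Real.sqrt_nonneg _)
  rw [← ENNReal.ofReal_le_ofReal_iff (by positivity), ofReal_sqrt_sum_sum_hNormSq_pd]
  grw [hgrad]
  rw [ENNReal.ofReal_mul (by positivity), ENNReal.ofReal_mul (by positivity),
    ENNReal.ofReal_mul (norm_nonneg _), ENNReal.ofReal_add zero_le_one hP, ENNReal.ofReal_one,
    ofReal_norm, ENNReal.ofReal_coe_nnreal]
  exact le_of_eq (by ring)

theorem statement7_general (d : ℕ) (s : ℝ) (hd : 3 ≤ d) (hs : (d : ℝ) / 2 < s) :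
    ∃ C : ℝ → ℝ, ∀ (φ : 𝓢(Euc d, ℝ)) (v : Fin d → 𝓢(Euc d, ℂ)),
      Real.sqrt (∑ i, ∑ j, hNormSq d s (pd d i (v j)))
        ≤ ((1 + hNorm d (s + 1) (fun x => (φ x : ℂ))) * C (hNorm d s (fun x => (φ x : ℂ)))) *
          (hNorm d s
              (fun x => ∑ i, pd d i (fun y => Complex.exp (φ y) * v i y) x)
            + Real.sqrt (∑ i, ∑ j, hNormSq d s
                (fun x => pd d i (v j) x - pd d j (v i) x))) := by
  choose C hC using exists_sqrt_sum_sum_hNormSq_pd_le hd hs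
  refine ⟨C, fun φ v => ?_⟩
  have hdiv : (fun x => ∑ i, pd d i (fun y => Complex.exp (φ y) * v i y) x) =
      divergence fun i => expMul (φ.postcompCLM Complex.ofRealCLM) (v i) := by
    ext x
    rw [divergence_apply]
    congr! with i _ y
    exact (expMul_apply (φ.postcompCLM Complex.ofRealCLM) (v i) y).symm
  rw [hdiv]
  exact hC _ (φ.postcompCLM Complex.ofRealCLM) v (fun x => Complex.ofReal_im (φ x)) le_rfl

/-- Weighted Friedrichs estimate (Proposition 2.7):
`‖∇v‖_{H^s} ≤ C (‖div(e^φ v)‖_{H^s} + ‖curl v‖_{H^s})`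
with `C = (1+‖φ‖_{H^{s+1}}) 𝒞(‖φ‖_{H^s}, ‖∇φ‖_{L^∞})`. -/
theorem statement7 (d s : ℕ) (hd : 3 ≤ d) (hs : (d : ℝ) / 2 < s) :
    ∃ C : ℝ → ℝ → ℝ, ∀ (φ : 𝓢(Euc d, ℝ)) (v : Fin d → 𝓢(Euc d, ℂ)),
      Real.sqrt (∑ i, ∑ j, hNormSq d s (pd d i (v j)))
        ≤ ((1 + hNorm d ((s : ℝ) + 1) (fun x => (φ x : ℂ))) *
            C (hNorm d s (fun x => (φ x : ℂ))) (⨆ x, ‖fderiv ℝ (⇑φ) x‖)) *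
          (hNorm d s
              (fun x => ∑ i, pd d i (fun y => Complex.exp (φ y) * v i y) x)
            + Real.sqrt (∑ i, ∑ j, hNormSq d s
                (fun x => pd d i (v j) x - pd d j (v i) x))) := by
  obtain ⟨C, hC⟩ := statement7_general d s hd hs
  exact ⟨fun a _ => C a, hC⟩
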